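/- arXiv:2201.00306 — 2 statements merged into one kernel-verified Lean document; each statement's English description precedes it below -/
import Mathlib

section
/- Let n ≥ 2 and k ≥ 1 be integers, and let Sp_{2n}(ℤ) denote the symplectic group of 2n×2n integer matrices g satisfying gᵀ J g = J, where J is the block matrix (0, I_n; −I_n, 0). Then the subgroup of Sp_{2n}(ℤ) generated by the matrices of the form (I_n, B; 0, I_n) and of the form (I_n, 0; C, I_n), where B and C range over symmetric n×n integer matrices all of whose entries are divisible by k, has finite index in Sp_{2n}(ℤ). -/
/-!
Let `H` be the group in question and `T u t : x ↦ x + t ω(u, x) u` the transvections of the standard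
symplectic form `ω` on `ℤ²ⁿ`. The given generators contain `T u (k t)` for all `u` in two opposite
Lagrangians. Conjugating these by each other, which needs two orthogonal hyperbolic planes, hence
`n ≥ 2`, shows that `T u (k⁵ t) ∈ H` for every vector `u`.

Put `m = k⁵`, let `N ≤ H` be the normal subgroup generated by all `T u (m t)`, and fix a basis
vector `e`. Two vectors in the orbit of `e` that are congruent mod `m` differ by an element of `N`,
so in `Q = Sp / N` the image `τ` of `T e 1` has only finitely many conjugates; moreover `τᵐ = 1`.
By the Euclidean algorithm `Sp` is generated by transvections, and `τ` generates `Q` as a normal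
subgroup. Hence the centre of `Q` has finite index, by Schur's theorem the commutator subgroup of
`Q` is finite, and the abelianization of `Q` is a quotient of `⟨τ⟩`. So `Q` is finite.
-/

open Matrix

/-- The standard symplectic form `J = (0, I_n; −I_n, 0)` as a block matrix. -/
def Jstd (n : ℕ) : Matrix (Fin n ⊕ Fin n) (Fin n ⊕ Fin n) ℤ :=
  Matrix.fromBlocks 0 1 (-1) 0

/-- The integral symplectic group `Sp_{2n}(ℤ)`: invertible `2n × 2n` integer matrices `g`
with `gᵀ * J * g = J`. -/
def SpZ (n : ℕ) : Subgroup (GL (Fin n ⊕ Fin n) ℤ) where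
  carrier := {g | (g.val)ᵀ * Jstd n * g.val = Jstd n}
  one_mem' := by simp
  mul_mem' := by
    intro a b ha hb
    simp only [Set.mem_setOf_eq, Units.val_mul, Matrix.transpose_mul] at *
    calc (b.val)ᵀ * (a.val)ᵀ * Jstd n * (a.val * b.val)
        = (b.val)ᵀ * ((a.val)ᵀ * Jstd n * a.val) * b.val := by
          simp only [Matrix.mul_assoc]
      _ = (b.val)ᵀ * Jstd n * b.val := by rw [ha]
      _ = Jstd n := hb
  inv_mem' := by
    intro a ha
    simp only [Set.mem_setOf_eq] at *
    have hmul : a.val * (a⁻¹).val = 1 := by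
      rw [← Units.val_mul, mul_inv_cancel, Units.val_one]
    calc ((a⁻¹).val)ᵀ * Jstd n * (a⁻¹).val
        = ((a⁻¹).val)ᵀ * ((a.val)ᵀ * Jstd n * a.val) * (a⁻¹).val := by rw [ha]
      _ = (a.val * (a⁻¹).val)ᵀ * Jstd n * (a.val * (a⁻¹).val) := by
          rw [Matrix.transpose_mul]; simp only [Matrix.mul_assoc]
      _ = Jstd n := by rw [hmul]; simp

/-! ### Transvections in the isometry group of an alternating form -/

section Transvections

variable {R M : Type*} [CommRing R] [AddCommGroup M] [Module R M] {ω : LinearMap.BilinForm R M}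

variable (ω) in
/-- The group of linear automorphisms preserving the bilinear form `ω`. For a nondegenerate
alternating form it is the symplectic group. -/
def isometryGroup : Subgroup (M ≃ₗ[R] M) where
  carrier := {g | ∀ x y, ω (g x) (g y) = ω x y}
  one_mem' _ _ := rfl
  mul_mem' hg hh x y := (hg _ _).trans (hh x y)
  inv_mem' {g} hg x y := by
    rw [← hg (g⁻¹ x), ← LinearEquiv.mul_apply, ← LinearEquiv.mul_apply, mul_inv_cancel]
    rfl

theorem isometryGroup_smul_smul (g : isometryGroup ω) (x y : M) : ω (g • x) (g • y) = ω x y :=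
  g.2 x y

theorem isometryGroup_ext {g h : isometryGroup ω} (H : ∀ x : M, g • x = h • x) : g = h :=
  Subtype.ext (LinearEquiv.ext H)

/-- The symplectic transvection `x ↦ x + t ω(u, x) u`. -/
def sympTransvection (hω : ω.IsAlt) (u : M) (t : R) : isometryGroup ω where
  val := LinearEquiv.transvection (f := t • ω u) (v := u)
    (by rw [LinearMap.smul_apply, hω.self_eq_zero, smul_zero])
  property x y := by
    simp only [LinearEquiv.transvection.apply, LinearMap.smul_apply, map_add, map_smul,
      LinearMap.add_apply, smul_eq_mul, hω.self_eq_zero, ← hω.neg_eq u x]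
    ring

variable (hω : ω.IsAlt)

local notation "T" => sympTransvection hω

theorem sympTransvection_smul (u : M) (t : R) (x : M) : T u t • x = x + (t * ω u x) • u :=
  rfl

theorem sympTransvection_mul (u : M) (s t : R) : T u s * T u t = T u (s + t) := by
  refine isometryGroup_ext fun x => ?_
  simp only [mul_smul, sympTransvection_smul, map_add, map_smul, hω.self_eq_zero, smul_zero,
    add_zero]
  module

theorem sympTransvection_zero (u : M) : T u (0 : R) = 1 :=
  isometryGroup_ext fun x => by rw [sympTransvection_smul, zero_mul, zero_smul, add_zero, one_smul]

theorem sympTransvection_inv (u : M) (t : R) : (T u t)⁻¹ = T u (-t) := by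
  rw [inv_eq_iff_mul_eq_one, sympTransvection_mul, add_neg_cancel, sympTransvection_zero]

theorem sympTransvection_zpow (u : M) (t : R) (n : ℤ) : T u t ^ n = T u (n • t) := by
  let φ : Multiplicative R →* isometryGroup ω :=
    { toFun := fun t => T u t.toAdd
      map_one' := sympTransvection_zero hω u
      map_mul' := fun s t => (sympTransvection_mul hω u s.toAdd t.toAdd).symm }
  exact (map_zpow φ (.ofAdd t) n).symm

theorem sympTransvection_smul_left (c : R) (u : M) (t : R) : T (c • u) t = T u (c ^ 2 * t) := by
  refine isometryGroup_ext fun x => ?_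
  simp only [sympTransvection_smul, map_smul, LinearMap.smul_apply]
  module

theorem sympTransvection_conj (g : isometryGroup ω) (u : M) (t : R) :
    g * T u t * g⁻¹ = T (g • u) t := by
  refine isometryGroup_ext fun x => ?_
  rw [mul_smul, mul_smul, sympTransvection_smul, sympTransvection_smul, smul_add, smul_inv_smul,
    smul_comm g, ← isometryGroup_smul_smul g, smul_inv_smul]

theorem normal_closure_sympTransvection (m : R) :
    (Subgroup.closure {g | ∃ u, ∃ t : R, g = T u (m * t)}).Normal := by
  refine ⟨fun x hx g => ?_⟩
  suffices h : Subgroup.closure {g | ∃ u, ∃ t : R, g = T u (m * t)} ≤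
      (Subgroup.closure {g | ∃ u, ∃ t : R, g = T u (m * t)}).comap
        (MulAut.conj g).toMonoidHom from h hx
  rw [Subgroup.closure_le]
  rintro _ ⟨u, t, rfl⟩
  exact Subgroup.subset_closure ⟨g • u, t, sympTransvection_conj hω g u _⟩

/-- The Eichler transformation: for `ω(u, v) = 0` it is `x ↦ x + t (ω(u, x) v + ω(v, x) u)`. -/
def eichler (u v : M) (t : R) : isometryGroup ω :=
  T (u + v) t * T u (-t) * T v (-t)

local notation "E" => eichler hω

variable {hω}

theorem eichler_mem {H : Subgroup (isometryGroup ω)} {u v : M} {t : R} (huv : T (u + v) t ∈ H)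
    (hu : T u t ∈ H) (hv : T v t ∈ H) : E u v t ∈ H := by
  rw [eichler, ← sympTransvection_inv, ← sympTransvection_inv]
  exact mul_mem (mul_mem huv (inv_mem hu)) (inv_mem hv)

theorem eichler_smul {u v : M} (huv : ω u v = 0) (t : R) (x : M) :
    E u v t • x = x + (t * ω u x) • v + (t * ω v x) • u := by
  have hvu : ω v u = 0 := by rw [← hω.neg_eq, huv, neg_zero]
  simp only [eichler, mul_smul, sympTransvection_smul, map_add, map_smul, LinearMap.add_apply,
    hω.self_eq_zero, huv, hvu]
  module

theorem eichler_comm {u v : M} (huv : ω u v = 0) (t : R) : E u v t = E v u t := by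
  have hvu : ω v u = 0 := by rw [← hω.neg_eq, huv, neg_zero]
  refine isometryGroup_ext fun x => ?_
  rw [eichler_smul huv, eichler_smul hvu, add_right_comm]

theorem eichler_smul_right {u v : M} (huv : ω u v = 0) (c t : R) :
    E u (c • v) t = E u v (c * t) := by
  have hucv : ω u (c • v) = 0 := by rw [map_smul, huv, smul_zero]
  refine isometryGroup_ext fun x => ?_
  simp only [eichler_smul huv, eichler_smul hucv, map_smul, LinearMap.smul_apply, smul_eq_mul]
  module

theorem eichler_add_right {u v w : M} (huv : ω u v = 0) (huw : ω u w = 0) (t : R) :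
    E u (v + w) t = E u v t * E u w t * T u (-(t * t * ω v w)) := by
  have huvw : ω u (v + w) = 0 := by rw [map_add, huv, huw, add_zero]
  refine isometryGroup_ext fun x => ?_
  have hvu : ω v u = 0 := by rw [← hω.neg_eq, huv, neg_zero]
  have hwu : ω w u = 0 := by rw [← hω.neg_eq, huw, neg_zero]
  simp only [mul_smul, eichler_smul huv, eichler_smul huw, eichler_smul huvw,
    sympTransvection_smul, map_add, map_smul, LinearMap.add_apply, smul_eq_mul, hω.self_eq_zero,
    huw, hvu, hwu]
  module

theorem sympTransvection_add {u v : M} (huv : ω u v = 0) (t : R) :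
    T (u + v) t = T u t * T v t * E u v t := by
  have hvu : ω v u = 0 := by rw [← hω.neg_eq, huv, neg_zero]
  refine isometryGroup_ext fun x => ?_
  simp only [mul_smul, eichler_smul huv, sympTransvection_smul, map_add, map_smul,
    LinearMap.add_apply, smul_eq_mul, hω.self_eq_zero, huv, hvu]
  module

end Transvections

/-! ### Hyperbolic families -/

section HyperbolicFamilies

variable {R M : Type*} [CommRing R] [AddCommGroup M] [Module R M] {ω : LinearMap.BilinForm R M}

/-- A family of pairwise orthogonal hyperbolic pairs `(e i, f i)`. -/
structure IsHyperbolicFamily {ι : Type*} (ω : LinearMap.BilinForm R M) (e f : ι → M) : Prop where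
  left_left : ∀ i j, ω (e i) (e j) = 0
  right_right : ∀ i j, ω (f i) (f j) = 0
  left_right_self : ∀ i, ω (e i) (f i) = 1
  left_right_of_ne : ∀ {i j}, i ≠ j → ω (e i) (f j) = 0

/-- A hyperbolic family spanning the whole module. It is then automatically a basis. -/
structure IsSymplecticBasis {ι : Type*} (ω : LinearMap.BilinForm R M) (e f : ι → M) : Prop
    extends IsHyperbolicFamily ω e f where
  span_eq_top : Submodule.span R (Set.range e ∪ Set.range f) = ⊤

variable {ι : Type*} {e f : ι → M}

theorem IsHyperbolicFamily.right_left_self (h : IsHyperbolicFamily ω e f) (hω : ω.IsAlt) (i : ι) :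
    ω (f i) (e i) = -1 := by
  rw [← hω.neg_eq, h.left_right_self]

theorem IsHyperbolicFamily.right_left_of_ne (h : IsHyperbolicFamily ω e f) (hω : ω.IsAlt)
    {i j : ι} (hij : i ≠ j) : ω (f i) (e j) = 0 := by
  rw [← hω.neg_eq, h.left_right_of_ne hij.symm, neg_zero]

end HyperbolicFamilies

/-! ### Transvections along two opposite Lagrangians -/

section Lagrangians

variable {R M : Type*} [CommRing R] [AddCommGroup M] [Module R M] {ω : LinearMap.BilinForm R M}
  {hω : ω.IsAlt} {H : Subgroup (isometryGroup ω)}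

local notation "T" => sympTransvection hω
local notation "E" => eichler hω

theorem eichler_mem_of_mem_span {u w : M} {c : R} (hT : ∀ t, T u (c * t) ∈ H) {X : Set M}
    (hX : ∀ x ∈ X, ω u x = 0) (hE : ∀ x ∈ X, ∀ t, E u x (c * t) ∈ H)
    (hw : w ∈ Submodule.span R X) (t : R) : E u w (c * t) ∈ H := by
  suffices hmem : ω u w = 0 ∧ ∀ t, E u w (c * t) ∈ H from hmem.2 t
  induction hw using Submodule.span_induction with
  | mem x hx => exact ⟨hX x hx, hE x hx⟩
  | zero =>
    refine ⟨map_zero _, fun t => ?_⟩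
    have hone : E u 0 (c * t) = 1 := isometryGroup_ext fun x => by
      rw [eichler_smul (map_zero _), smul_zero, add_zero, map_zero, LinearMap.zero_apply, mul_zero,
        zero_smul, add_zero, one_smul]
    exact hone ▸ one_mem H
  | add v w _ _ hv hw =>
    refine ⟨by rw [map_add, hv.1, hw.1, add_zero], fun t => ?_⟩
    rw [eichler_add_right hv.1 hw.1, mul_assoc c, mul_assoc c, ← mul_neg]
    exact mul_mem (mul_mem (hv.2 t) (hw.2 t)) (hT _)
  | smul a v _ hv =>
    refine ⟨by rw [map_smul, hv.1, smul_zero], fun t => ?_⟩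
    rw [eichler_smul_right hv.1, mul_left_comm]
    exact hv.2 (a * t)

/-- `E e w s` moves `f` to `f + s w`, so it conjugates `T f t` to `T (f + s w) t`. -/
theorem sympTransvection_mul_eichler_mem {e f w : M} {s t : R} (hef : ω e f = 1)
    (hew : ω e w = 0) (hfw : ω f w = 0) (hT : T f t ∈ H) (hE : E e w s ∈ H) :
    T w (s ^ 2 * t) * E f w (s * t) ∈ H := by
  have hwf : ω w f = 0 := by rw [← hω.neg_eq, hfw, neg_zero]
  have hf : E e w s • f = f + s • w := by
    rw [eichler_smul hew, hef, hwf, mul_one, mul_zero, zero_smul, add_zero]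
  have hconj : T (f + s • w) t ∈ H := by
    rw [← hf, ← sympTransvection_conj]
    exact mul_mem (mul_mem hE hT) (inv_mem hE)
  have hfsw : ω f (s • w) = 0 := by rw [map_smul, hfw, smul_zero]
  rwa [sympTransvection_add hfsw, sympTransvection_smul_left, eichler_smul_right hfw, mul_assoc,
    Subgroup.mul_mem_cancel_left H hT] at hconj

namespace IsHyperbolicFamily

variable {ι : Type*} {e f : ι → M} {k : R}

theorem eichler_right_left_mem (h : IsHyperbolicFamily ω e f)
    (he : ∀ u ∈ Submodule.span R (Set.range e), ∀ t, T u (k * t) ∈ H)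
    (hf : ∀ u ∈ Submodule.span R (Set.range f), ∀ t, T u (k * t) ∈ H) {i j : ι} (hij : i ≠ j)
    (t : R) : E (f j) (e i) (k ^ 2 * t) ∈ H := by
  have hei (i) : e i ∈ Submodule.span R (Set.range e) := Submodule.subset_span ⟨i, rfl⟩
  have hfj : f j ∈ Submodule.span R (Set.range f) := Submodule.subset_span ⟨j, rfl⟩
  have hE : E (e j) (e i) k ∈ H := by
    rw [← mul_one k]
    exact eichler_mem (he _ (add_mem (hei j) (hei i)) 1) (he _ (hei j) 1) (he _ (hei i) 1)
  have hmem := sympTransvection_mul_eichler_mem (h.left_right_self j) (h.left_left j i)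
    (h.right_left_of_ne hω hij.symm) (hf _ hfj t) hE
  have hT : T (e i) (k ^ 2 * (k * t)) ∈ H := by
    rw [mul_left_comm]
    exact he _ (hei i) _
  rwa [Subgroup.mul_mem_cancel_left H hT, ← mul_assoc, ← sq] at hmem

theorem eichler_mem_of_mem_span_compl (h : IsHyperbolicFamily ω e f)
    (he : ∀ u ∈ Submodule.span R (Set.range e), ∀ t, T u (k * t) ∈ H)
    (hf : ∀ u ∈ Submodule.span R (Set.range f), ∀ t, T u (k * t) ∈ H) {j : ι} {w : M}
    (hw : w ∈ Submodule.span R (e '' {j}ᶜ ∪ f '' {j}ᶜ)) (t : R) :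
    E (e j) w (k ^ 2 * t) ∈ H ∧ E (f j) w (k ^ 2 * t) ∈ H := by
  have hei (i) : e i ∈ Submodule.span R (Set.range e) := Submodule.subset_span ⟨i, rfl⟩
  have hfi (i) : f i ∈ Submodule.span R (Set.range f) := Submodule.subset_span ⟨i, rfl⟩
  have he' : ∀ u ∈ Submodule.span R (Set.range e), ∀ t, T u (k ^ 2 * t) ∈ H := fun u hu t => by
    rw [sq, mul_assoc]
    exact he u hu _
  have hf' : ∀ u ∈ Submodule.span R (Set.range f), ∀ t, T u (k ^ 2 * t) ∈ H := fun u hu t => by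
    rw [sq, mul_assoc]
    exact hf u hu _
  constructor
  · refine eichler_mem_of_mem_span (he' _ (hei j)) ?_ ?_ hw t
    · rintro _ (⟨i, -, rfl⟩ | ⟨i, hi, rfl⟩)
      exacts [h.left_left j i, h.left_right_of_ne (Ne.symm hi)]
    · rintro _ (⟨i, -, rfl⟩ | ⟨i, hi, rfl⟩) t
      · exact eichler_mem (he' _ (add_mem (hei j) (hei i)) t) (he' _ (hei j) t) (he' _ (hei i) t)
      · rw [eichler_comm (h.left_right_of_ne (Ne.symm hi))]
        exact h.eichler_right_left_mem he hf (Ne.symm hi) t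
  · refine eichler_mem_of_mem_span (hf' _ (hfi j)) ?_ ?_ hw t
    · rintro _ (⟨i, hi, rfl⟩ | ⟨i, -, rfl⟩)
      exacts [h.right_left_of_ne hω (Ne.symm hi), h.right_right j i]
    · rintro _ (⟨i, hi, rfl⟩ | ⟨i, -, rfl⟩) t
      · exact h.eichler_right_left_mem he hf hi t
      · exact eichler_mem (hf' _ (add_mem (hfi j) (hfi i)) t) (hf' _ (hfi j) t) (hf' _ (hfi i) t)

theorem apply_eq_zero_of_mem_span_compl (h : IsHyperbolicFamily ω e f) (hω : ω.IsAlt) {j : ι}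
    {w : M} (hw : w ∈ Submodule.span R (e '' {j}ᶜ ∪ f '' {j}ᶜ)) :
    ω (e j) w = 0 ∧ ω (f j) w = 0 := by
  suffices hle : Submodule.span R (e '' {j}ᶜ ∪ f '' {j}ᶜ) ≤
      LinearMap.ker (ω (e j)) ⊓ LinearMap.ker (ω (f j)) from hle hw
  rw [Submodule.span_le]
  rintro _ (⟨i, hi, rfl⟩ | ⟨i, hi, rfl⟩)
  exacts [⟨h.left_left j i, h.right_left_of_ne hω (Ne.symm hi)⟩,
    ⟨h.left_right_of_ne (Ne.symm hi), h.right_right j i⟩]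

theorem sympTransvection_mem_of_mem_span_compl (h : IsHyperbolicFamily ω e f)
    (he : ∀ u ∈ Submodule.span R (Set.range e), ∀ t, T u (k * t) ∈ H)
    (hf : ∀ u ∈ Submodule.span R (Set.range f), ∀ t, T u (k * t) ∈ H) {j : ι} {w : M}
    (hw : w ∈ Submodule.span R (e '' {j}ᶜ ∪ f '' {j}ᶜ)) (t : R) : T w (k ^ 5 * t) ∈ H := by
  have hE (t) := h.eichler_mem_of_mem_span_compl he hf hw t
  obtain ⟨hew, hfw⟩ := h.apply_eq_zero_of_mem_span_compl hω hw
  have hEe : E (e j) w (k ^ 2) ∈ H := by simpa only [mul_one] using (hE 1).1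
  have hmem := sympTransvection_mul_eichler_mem (h.left_right_self j) hew hfw
    (hf _ (Submodule.subset_span ⟨j, rfl⟩) t) hEe
  rw [Subgroup.mul_mem_cancel_right H (hE (k * t)).2] at hmem
  convert hmem using 2
  ring

end IsHyperbolicFamily

theorem IsSymplecticBasis.exists_add_eq {ι : Type*} {e f : ι → M} (h : IsSymplecticBasis ω e f)
    (j : ι) (x : M) : ∃ p ∈ Submodule.span R {e j, f j},
      ∃ w ∈ Submodule.span R (e '' {j}ᶜ ∪ f '' {j}ᶜ), p + w = x := by
  have hsub : Set.range e ∪ Set.range f ⊆ {e j, f j} ∪ (e '' {j}ᶜ ∪ f '' {j}ᶜ) := by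
    rintro _ (⟨i, rfl⟩ | ⟨i, rfl⟩) <;> obtain rfl | hij := eq_or_ne i j
    exacts [.inl (.inl rfl), .inr (.inl ⟨i, hij, rfl⟩), .inl (.inr rfl), .inr (.inr ⟨i, hij, rfl⟩)]
  have hx : x ∈ Submodule.span R (Set.range e ∪ Set.range f) := h.span_eq_top ▸ Submodule.mem_top
  refine Submodule.mem_sup.1 ?_
  rw [← Submodule.span_union]
  exact Submodule.span_mono hsub hx

/-- A vector is split as `p + w` with `p` in one hyperbolic plane and `w` in the span of the
others; `p` in turn lies in the complement of any second plane. -/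
theorem IsSymplecticBasis.sympTransvection_mem {ι : Type*} [Nontrivial ι] {e f : ι → M} {k : R}
    (h : IsSymplecticBasis ω e f)
    (he : ∀ u ∈ Submodule.span R (Set.range e), ∀ t, T u (k * t) ∈ H)
    (hf : ∀ u ∈ Submodule.span R (Set.range f), ∀ t, T u (k * t) ∈ H) (x : M) (t : R) :
    T x (k ^ 5 * t) ∈ H := by
  obtain ⟨i, j, hij⟩ := exists_pair_ne ι
  obtain ⟨p, hp, w, hw, rfl⟩ := h.exists_add_eq j x
  obtain ⟨hew, hfw⟩ := h.apply_eq_zero_of_mem_span_compl hω hw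
  have hwe : ω w (e j) = 0 := by rw [← hω.neg_eq, hew, neg_zero]
  have hwf : ω w (f j) = 0 := by rw [← hω.neg_eq, hfw, neg_zero]
  have hTw (t) : T w (k ^ 5 * t) ∈ H := h.sympTransvection_mem_of_mem_span_compl he hf hw t
  have hTp : T p (k ^ 5 * t) ∈ H := by
    refine h.sympTransvection_mem_of_mem_span_compl he hf (j := i)
      (Submodule.span_mono (Set.pair_subset ?_ ?_) hp) t
    exacts [.inl ⟨j, hij.symm, rfl⟩, .inr ⟨j, hij.symm, rfl⟩]
  have hE : E w p (k ^ 5 * t) ∈ H := by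
    have hk (t : R) : k ^ 5 * t = k ^ 2 * (k ^ 3 * t) := by ring
    refine eichler_mem_of_mem_span hTw ?_ ?_ hp t
    · rintro _ (rfl | rfl)
      exacts [hwe, hwf]
    · rintro _ (rfl | rfl) t
      · rw [eichler_comm hwe, hk]
        exact (h.eichler_mem_of_mem_span_compl he hf hw _).1
      · rw [eichler_comm hwf, hk]
        exact (h.eichler_mem_of_mem_span_compl he hf hw _).2
  have hwp : ω w p = 0 := by
    obtain ⟨a, b, rfl⟩ := Submodule.mem_span_pair.1 hp
    rw [map_add, map_smul, map_smul, hwe, hwf, smul_zero, smul_zero, add_zero]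
  rw [add_comm, sympTransvection_add hwp]
  exact mul_mem (mul_mem (hTw t) hTp) hE

end Lagrangians

/-! ### Orbits of vectors under transvections of level `m` -/

section RelativeOrbits

variable {R M : Type*} [CommRing R] [AddCommGroup M] [Module R M] {ω : LinearMap.BilinForm R M}

variable {ι : Type*} {e f : ι → M}

theorem exists_isCoprime_mul_add_mul_eq_zero [IsDomain R] [IsBezout R] (a b : R) :
    ∃ x z, IsCoprime x z ∧ x * a + z * b = 0 := by
  classical
  let := IsBezout.toGCDDomain R
  obtain ⟨a', b', ha, hb, hu⟩ := extract_gcd a b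
  refine ⟨b', -a', ((gcd_isUnit_iff a' b').1 hu).symm.neg_right, ?_⟩
  linear_combination b' * ha - a' * hb

theorem IsHyperbolicFamily.exists_orthogonal_hyperbolic_pair [IsDomain R] [IsBezout R]
    (h : IsHyperbolicFamily ω e f) (hω : ω.IsAlt) (j : ι) (F : M) :
    ∃ r ∈ Submodule.span R {e j, f j}, ∃ s ∈ Submodule.span R {e j, f j},
      ω F r = 0 ∧ ω s r = 1 := by
  obtain ⟨x, z, ⟨p, q, hpq⟩, hxz⟩ :=
    exists_isCoprime_mul_add_mul_eq_zero (ω F (e j)) (ω F (f j))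
  refine ⟨x • e j + z • f j, Submodule.mem_span_pair.2 ⟨x, z, rfl⟩,
    q • e j + (-p) • f j, Submodule.mem_span_pair.2 ⟨q, -p, rfl⟩, ?_, ?_⟩
  · simpa only [map_add, map_smul, smul_eq_mul] using hxz
  · simp only [map_add, map_smul, LinearMap.add_apply, LinearMap.smul_apply, smul_eq_mul,
      h.left_left, h.right_right, h.left_right_self, h.right_left_self hω]
    linear_combination hpq

variable {hω : ω.IsAlt} {N : Subgroup (isometryGroup ω)} {m : R}

local notation "T" => sympTransvection hω
local notation "E" => eichler hω

theorem orbit_add_smul_eq (hN : ∀ u t, T u (m * t) ∈ N) {u v y : M} (huv : ω u v = 1)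
    (huy : ω u y = 0) : MulAction.orbit N (v + m • y) = MulAction.orbit N v := by
  have hE : E u y (m * 1) ∈ N := eichler_mem (hN _ _) (hN _ _) (hN _ _)
  refine MulAction.orbit_eq_iff.2 ⟨⟨_, mul_mem (hN u (-ω y v)) hE⟩, ?_⟩
  change (T u (m * -ω y v) * E u y (m * 1)) • v = v + m • y
  simp only [mul_smul, eichler_smul huy, sympTransvection_smul, map_add, map_smul,
    hω.self_eq_zero, huv, huy]
  module

/-- Both moves of `orbit_add_smul_eq` go through the intermediate vector `v + m ω(u, y) r`, where
`r` lies in a second hyperbolic plane and is orthogonal to `F`. -/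
theorem IsHyperbolicFamily.orbit_eq_of_eq_add_smul [IsDomain R] [IsBezout R]
    (h : IsHyperbolicFamily ω e f) (hN : ∀ u t, T u (m * t) ∈ N) {i j : ι} (hij : i ≠ j)
    {F v y : M} (hF : ω F v = 1) (hv : e i = v + m • y) :
    MulAction.orbit N v = MulAction.orbit N (e i) := by
  obtain ⟨r, hr, s, hs, hFr, hsr⟩ := h.exists_orthogonal_hyperbolic_pair hω j F
  obtain ⟨a, b, rfl⟩ := Submodule.mem_span_pair.1 hr
  obtain ⟨c, d, rfl⟩ := Submodule.mem_span_pair.1 hs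
  set r := a • e j + b • f j
  set u := c • e j + d • f j - f i with hu
  have hur : ω u r = 1 := by
    have hfr : ω (f i) r = 0 := by
      simp only [r, map_add, map_smul, h.right_left_of_ne hω hij, h.right_right, smul_zero,
        add_zero]
    rw [hu, map_sub, LinearMap.sub_apply, hsr, hfr, sub_zero]
  have hue : ω u (e i) = 1 := by
    simp only [hu, map_sub, map_add, map_smul, LinearMap.sub_apply, LinearMap.add_apply,
      LinearMap.smul_apply, h.left_left, h.right_left_of_ne hω hij.symm, h.right_left_self hω,
      smul_zero, add_zero, zero_sub, neg_neg]
  set z := y - ω u y • r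
  have huz : ω u z = 0 := by
    simp only [z, map_sub, map_smul, hur, smul_eq_mul, mul_one, sub_self]
  have he : e i = v + m • ω u y • r + m • z := by
    rw [hv]
    module
  have huv : ω u (v + m • ω u y • r) = 1 := by
    rwa [he, map_add, map_smul, huz, smul_zero, add_zero] at hue
  have hFr' : ω F (ω u y • r) = 0 := by rw [map_smul, hFr, smul_zero]
  calc MulAction.orbit N v = MulAction.orbit N (v + m • ω u y • r) :=
        (orbit_add_smul_eq hN hF hFr').symm
    _ = MulAction.orbit N (e i) := by rw [he, orbit_add_smul_eq hN huv huz]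

end RelativeOrbits

/-! ### Generation by transvections -/

section PathsOfTransvections

variable {R M : Type*} [CommRing R] [AddCommGroup M] [Module R M] {ω : LinearMap.BilinForm R M}
  {hω : ω.IsAlt}

local notation "T" => sympTransvection hω

variable {N : Subgroup (isometryGroup ω)} {W : Submodule R M}

theorem orbit_eq_of_isUnit (hN : ∀ u ∈ W, (∃ y, ω u y = 1) → ∀ t, T u t ∈ N) {v w : M}
    (hv : v ∈ W) (hw : w ∈ W) (hvw : IsUnit (ω v w)) :
    MulAction.orbit N v = MulAction.orbit N w := by
  obtain ⟨c, hc⟩ := hvw.exists_left_inv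
  have hwv : ω (w - v) v = -ω v w := by
    rw [map_sub, LinearMap.sub_apply, hω.self_eq_zero, sub_zero, ← hω.neg_eq]
  have hu : ω (w - v) (-c • v) = 1 := by
    rw [map_smul, hwv, smul_eq_mul, neg_mul_neg, hc]
  refine (MulAction.orbit_eq_iff.2
    ⟨⟨_, hN _ (W.sub_mem hw hv) ⟨_, hu⟩ (-c)⟩, ?_⟩).symm
  change T (w - v) (-c) • v = w
  rw [sympTransvection_smul, hwv, neg_mul_neg, hc, one_smul, add_sub_cancel]

theorem orbit_eq_of_orthogonal (hN : ∀ u ∈ W, (∃ y, ω u y = 1) → ∀ t, T u t ∈ N) {v w e f : M}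
    (hv : v ∈ W) (hw : w ∈ W) (he : e ∈ W) (hf : f ∈ W) (hvw : IsUnit (ω v w))
    (hef : ω e f = 1) (hev : ω e v = 0) : MulAction.orbit N v = MulAction.orbit N e := by
  have hve : ω v e = 0 := by rw [← hω.neg_eq, hev, neg_zero]
  set u := w - ω w f • e
  have hu : u ∈ W := W.sub_mem hw (W.smul_mem _ he)
  have hfv : f - v ∈ W := W.sub_mem hf hv
  have hvu : ω v u = ω v w := by rw [map_sub, map_smul, hve, smul_zero, sub_zero]
  have huf : ω u f = 0 := by
    rw [map_sub, LinearMap.sub_apply, map_smul, LinearMap.smul_apply, hef, smul_eq_mul, mul_one,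
      sub_self]
  calc MulAction.orbit N v = MulAction.orbit N u := orbit_eq_of_isUnit hN hv hu (hvu ▸ hvw)
    _ = MulAction.orbit N (f - v) := orbit_eq_of_isUnit hN hu hfv (by
        rwa [map_sub, huf, zero_sub, hω.neg_eq, hvu])
    _ = MulAction.orbit N e := (orbit_eq_of_isUnit hN he hfv (by
        rw [map_sub, hef, hev, sub_zero]; exact isUnit_one)).symm

theorem exists_smul_eq_and_smul_eq (hN : ∀ u ∈ W, (∃ y, ω u y = 1) → ∀ t, T u t ∈ N)
    {e f f' : M} (he : e ∈ W) (hf : f ∈ W) (hf' : f' ∈ W) (hef : ω e f = 1)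
    (hef' : ω e f' = 1) : ∃ g ∈ N, g • e = e ∧ g • f = f' := by
  set t := ω f f' - 1 with ht
  set u := f' + t • e - f
  have hu : u ∈ W := W.sub_mem (W.add_mem hf' (W.smul_mem _ he)) hf
  have hfe : ω f e = -1 := by rw [← hω.neg_eq, hef]
  have hfe' : ω f' e = -1 := by rw [← hω.neg_eq, hef']
  have hff' : ω f' f = -ω f f' := (hω.neg_eq f f').symm
  have hue : ω u e = 0 := by
    simp only [u, map_sub, map_add, map_smul, LinearMap.sub_apply, LinearMap.add_apply,
      LinearMap.smul_apply, hfe, hfe', hω.self_eq_zero, smul_zero, add_zero, sub_self]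
  have huf : ω u f = -1 := by
    simp only [u, map_sub, map_add, map_smul, LinearMap.sub_apply, LinearMap.add_apply,
      LinearMap.smul_apply, hef, hff', hω.self_eq_zero, smul_eq_mul, ht]
    ring
  have hTu : T u (-1) ∈ N := hN u hu ⟨-f, by rw [map_neg, huf, neg_neg]⟩ _
  refine ⟨T e (-t) * T u (-1), mul_mem (hN e he ⟨f, hef⟩ _) hTu, ?_, ?_⟩
  · rw [mul_smul, sympTransvection_smul hω u, hue, mul_zero, zero_smul, add_zero,
      sympTransvection_smul, hω.self_eq_zero, mul_zero, zero_smul, add_zero]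
  · have hf'' : T u (-1) • f = f' + t • e := by
      rw [sympTransvection_smul, huf]
      module
    rw [mul_smul, hf'', sympTransvection_smul, map_add, map_smul, hω.self_eq_zero, hef']
    module

end PathsOfTransvections

section Generation

variable {R M : Type*} [EuclideanDomain R] [AddCommGroup M] [Module R M]
  {ω : LinearMap.BilinForm R M} {hω : ω.IsAlt}

local notation "T" => sympTransvection hω

section Orbits

variable {N : Subgroup (isometryGroup ω)} {W : Submodule R M}

/-- The Euclidean algorithm on `(ω(e, v), ω(e, w))`, each division step being a move
`v ↦ w - q v`, brings `v` to a vector orthogonal to `e`. -/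
theorem orbit_eq_of_hyperbolic_pairs (hN : ∀ u ∈ W, (∃ y, ω u y = 1) → ∀ t, T u t ∈ N)
    {v w e f : M} (hv : v ∈ W) (hw : w ∈ W) (he : e ∈ W) (hf : f ∈ W) (hvw : IsUnit (ω v w))
    (hef : ω e f = 1) : MulAction.orbit N v = MulAction.orbit N e := by
  generalize ha : ω e v = a
  generalize hb : ω e w = b
  induction a, b using EuclideanDomain.GCD.induction generalizing v w with
  | H0 b => exact orbit_eq_of_orthogonal hN hv hw he hf hvw hef ha
  | H1 a b _ ih =>
    have hw' : w - (b / a) • v ∈ W := W.sub_mem hw (W.smul_mem _ hv)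
    have hvw' : ω v (w - (b / a) • v) = ω v w := by
      rw [map_sub, map_smul, hω.self_eq_zero, smul_zero, sub_zero]
    have hrem : ω e (w - (b / a) • v) = b % a := by
      rw [map_sub, map_smul, ha, hb, smul_eq_mul, EuclideanDomain.mod_eq_sub_mul_div, mul_comm]
    calc MulAction.orbit N v = MulAction.orbit N (w - (b / a) • v) :=
          orbit_eq_of_isUnit hN hv hw' (hvw' ▸ hvw)
      _ = MulAction.orbit N e := ih hw' hv (by rwa [← hω.neg_eq, hvw', IsUnit.neg_iff]) hrem ha

theorem exists_isometry_smul_eq (hω : ω.IsAlt) {e f u y : M} (hef : ω e f = 1)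
    (huy : ω u y = 1) : ∃ g : isometryGroup ω, g • e = u := by
  have horb : MulAction.orbit (⊤ : Subgroup (isometryGroup ω)) u = MulAction.orbit _ e :=
    orbit_eq_of_hyperbolic_pairs (hω := hω) (W := ⊤) (fun _ _ _ _ => Subgroup.mem_top _)
      Submodule.mem_top Submodule.mem_top Submodule.mem_top Submodule.mem_top
      (huy ▸ isUnit_one) hef
  obtain ⟨g, hg⟩ := MulAction.orbit_eq_iff.1 horb
  exact ⟨g, hg⟩

theorem exists_smul_hyperbolic_pair_eq (hN : ∀ u ∈ W, (∃ y, ω u y = 1) → ∀ t, T u t ∈ N)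
    (hNW : ∀ g ∈ N, ∀ x ∈ W, g • x ∈ W) {v w e f : M} (hv : v ∈ W) (hw : w ∈ W) (he : e ∈ W)
    (hf : f ∈ W) (hvw : ω v w = 1) (hef : ω e f = 1) : ∃ g ∈ N, g • v = e ∧ g • w = f := by
  obtain ⟨⟨g, hg⟩, hgv⟩ := MulAction.orbit_eq_iff.1
    (orbit_eq_of_hyperbolic_pairs hN hv hw he hf (hvw ▸ isUnit_one) hef).symm
  have hgv : g • v = e := hgv
  have hegw : ω e (g • w) = 1 := by rw [← hgv, isometryGroup_smul_smul, hvw]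
  obtain ⟨g', hg', hge, hgw⟩ := exists_smul_eq_and_smul_eq hN he (hNW g hg w hw) hf hegw hef
  exact ⟨g' * g, mul_mem hg' hg, by rw [mul_smul, hgv, hge], by rw [mul_smul, hgw]⟩

end Orbits

variable (hω) in
/-- The subgroup generated by the transvections along unimodular vectors. -/
def transvectionSubgroup : Subgroup (isometryGroup ω) :=
  Subgroup.closure {g | ∃ u, (∃ y, ω u y = 1) ∧ ∃ t, g = T u t}

theorem sympTransvection_mem_transvectionSubgroup {u : M} (hu : ∃ y, ω u y = 1) (t : R) :
    T u t ∈ transvectionSubgroup hω :=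
  Subgroup.subset_closure ⟨u, hu, t, rfl⟩

variable {ι : Type*} {e f : ι → M}

/-- The next pair is brought back to its place by transvections along vectors of the orthogonal
complement of `P`; these fix `P` pointwise. -/
theorem exists_mul_mem_fixingSubgroup_pair {P : Set M} {e f : M} (he : ∀ p ∈ P, ω p e = 0)
    (hf : ∀ p ∈ P, ω p f = 0) (hef : ω e f = 1) {g : isometryGroup ω}
    (hg : g ∈ fixingSubgroup (isometryGroup ω) P) :
    ∃ h ∈ transvectionSubgroup hω, h * g ∈ fixingSubgroup (isometryGroup ω) ({e, f} ∪ P) := by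
  let N := transvectionSubgroup hω ⊓ fixingSubgroup (isometryGroup ω) P
  let W : Submodule R M := ⨅ p ∈ P, LinearMap.ker (ω p)
  have mem_W {x : M} : x ∈ W ↔ ∀ p ∈ P, ω p x = 0 := by
    simp only [W, Submodule.mem_iInf, LinearMap.mem_ker]
  have hfix {g : isometryGroup ω} (hg : g ∈ fixingSubgroup (isometryGroup ω) P) {x : M}
      (hx : x ∈ W) : g • x ∈ W := mem_W.2 fun p hp => by
    rw [← (mem_fixingSubgroup_iff _).1 hg p hp, isometryGroup_smul_smul, mem_W.1 hx p hp]
  have hN : ∀ u ∈ W, (∃ y, ω u y = 1) → ∀ t, T u t ∈ N := fun u hu hy t =>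
    ⟨sympTransvection_mem_transvectionSubgroup hy t, (mem_fixingSubgroup_iff _).2 fun p hp => by
      rw [sympTransvection_smul, ← hω.neg_eq, mem_W.1 hu p hp, neg_zero, mul_zero, zero_smul,
        add_zero]⟩
  obtain ⟨h, ⟨hh, hhP⟩, hhe, hhf⟩ := exists_smul_hyperbolic_pair_eq hN
    (fun g hg x hx => hfix hg.2 hx) (hfix hg (mem_W.2 he)) (hfix hg (mem_W.2 hf)) (mem_W.2 he)
    (mem_W.2 hf) ((isometryGroup_smul_smul g e f).trans hef) hef
  refine ⟨h, hh, (mem_fixingSubgroup_iff _).2 ?_⟩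
  rintro p ((rfl | rfl) | hp)
  · rw [mul_smul, hhe]
  · rw [mul_smul, hhf]
  · exact (mem_fixingSubgroup_iff _).1 (mul_mem hhP hg) p hp

theorem IsHyperbolicFamily.exists_mul_mem_fixingSubgroup (h : IsHyperbolicFamily ω e f)
    (g : isometryGroup ω) (S : Finset ι) : ∃ h ∈ transvectionSubgroup hω,
      h * g ∈ fixingSubgroup (isometryGroup ω) (e '' S ∪ f '' S) := by
  classical
  induction S using Finset.induction_on with
  | empty =>
    refine ⟨1, one_mem _, (mem_fixingSubgroup_iff _).2 ?_⟩
    simp only [Finset.coe_empty, Set.image_empty, Set.union_empty, Set.mem_empty_iff_false,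
      IsEmpty.forall_iff, implies_true]
  | insert i S hi ih =>
    obtain ⟨h₁, hh₁, hg₁⟩ := ih
    have hne {j : ι} (hj : j ∈ (S : Set ι)) : j ≠ i := ne_of_mem_of_not_mem hj hi
    obtain ⟨h₂, hh₂, hg₂⟩ := exists_mul_mem_fixingSubgroup_pair (hω := hω) (e := e i) (f := f i)
      (P := e '' S ∪ f '' S) (by
        rintro _ (⟨j, -, rfl⟩ | ⟨j, hj, rfl⟩)
        exacts [h.left_left j i, h.right_left_of_ne hω (hne hj)]) (by
        rintro _ (⟨j, hj, rfl⟩ | ⟨j, -, rfl⟩)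
        exacts [h.left_right_of_ne (hne hj), h.right_right j i]) (h.left_right_self i) hg₁
    refine ⟨h₂ * h₁, mul_mem hh₂ hh₁, ?_⟩
    have hP : e '' ↑(insert i S) ∪ f '' ↑(insert i S) = {e i, f i} ∪ (e '' S ∪ f '' S) := by
      rw [Finset.coe_insert, Set.image_insert_eq, Set.image_insert_eq, Set.insert_union,
        Set.union_insert, Set.insert_union, Set.singleton_union]
    rwa [mul_assoc, hP]

theorem IsSymplecticBasis.transvectionSubgroup_eq_top [Finite ι] (h : IsSymplecticBasis ω e f) :
    transvectionSubgroup hω = ⊤ := by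
  have := Fintype.ofFinite ι
  refine eq_top_iff.2 fun g _ => ?_
  obtain ⟨x, hx, hxg⟩ := h.exists_mul_mem_fixingSubgroup (hω := hω) g Finset.univ
  rw [Finset.coe_univ, Set.image_univ, Set.image_univ, mem_fixingSubgroup_iff] at hxg
  have hone : x * g = 1 := isometryGroup_ext fun y =>
    LinearMap.congr_fun (LinearMap.ext_on h.span_eq_top (f := (x * g).1.toLinearMap)
      (g := LinearMap.id) hxg) y
  rw [eq_inv_of_mul_eq_one_right hone]
  exact inv_mem hx

theorem IsSymplecticBasis.normalClosure_range_sympTransvection_eq_top [Finite ι]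
    (h : IsSymplecticBasis ω e f) (i : ι) :
    Subgroup.normalClosure (Set.range (T (e i))) = ⊤ := by
  rw [← top_le_iff, ← h.transvectionSubgroup_eq_top (hω := hω), transvectionSubgroup,
    Subgroup.closure_le]
  rintro _ ⟨u, ⟨y, huy⟩, t, rfl⟩
  obtain ⟨g, hg⟩ := exists_isometry_smul_eq hω (h.left_right_self i) huy
  rw [← hg, ← sympTransvection_conj]
  exact Subgroup.normalClosure_normal.conj_mem _
    (Subgroup.subset_normalClosure (Set.mem_range_self t)) g

end Generation

theorem IsSymplecticBasis.normalClosure_sympTransvection_eq_top {M ι : Type*} [AddCommGroup M]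
    {ω : LinearMap.BilinForm ℤ M} {hω : ω.IsAlt} {e f : ι → M} [Finite ι]
    (h : IsSymplecticBasis ω e f) (i : ι) :
    Subgroup.normalClosure {sympTransvection hω (e i) 1} = ⊤ := by
  rw [← top_le_iff, ← h.normalClosure_range_sympTransvection_eq_top (hω := hω) i]
  refine Subgroup.normalClosure_le_normal ?_
  rintro _ ⟨t, rfl⟩
  have hpow : sympTransvection hω (e i) t = sympTransvection hω (e i) 1 ^ t := by
    rw [sympTransvection_zpow, smul_eq_mul, mul_one]
  rw [SetLike.mem_coe, hpow]
  exact zpow_mem (Subgroup.subset_normalClosure (Set.mem_singleton _)) t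

/-! ### Finite index -/

section FiniteGroups

open scoped commutatorElement

variable {Q : Type*} [Group Q]

theorem finite_commutatorSet_of_finiteIndex_center [(Subgroup.center Q).FiniteIndex] :
    Finite (commutatorSet Q) := by
  refine ((Set.finite_range fun p : (Q ⧸ Subgroup.center Q) × (Q ⧸ Subgroup.center Q) =>
    ⁅p.1.out, p.2.out⁆).subset ?_).to_subtype
  rintro _ ⟨g, h, rfl⟩
  obtain ⟨⟨z, hz⟩, hgz⟩ := QuotientGroup.mk_out_eq_mul (Subgroup.center Q) g
  obtain ⟨⟨w, hw⟩, hhw⟩ := QuotientGroup.mk_out_eq_mul (Subgroup.center Q) h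
  rw [Subgroup.mem_center_iff] at hz hw
  have hzw : ⁅g * z, h * w⁆ = ⁅g, h⁆ := by
    rw [commutatorElement_def, commutatorElement_def, _root_.mul_inv_rev, _root_.mul_inv_rev]
    calc g * z * (h * w) * (z⁻¹ * g⁻¹) * (w⁻¹ * h⁻¹)
        = g * (z * (h * w * z⁻¹)) * (g⁻¹ * w⁻¹) * h⁻¹ := by group
      _ = g * ((h * w * z⁻¹) * z) * (g⁻¹ * w⁻¹) * h⁻¹ := by rw [hz (h * w * z⁻¹)]
      _ = g * h * (w * (g⁻¹ * w⁻¹)) * h⁻¹ := by group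
      _ = g * h * ((g⁻¹ * w⁻¹) * w) * h⁻¹ := by rw [hw (g⁻¹ * w⁻¹)]
      _ = g * h * g⁻¹ * h⁻¹ := by group
  exact ⟨(g, h), (congrArg₂ _ hgz hhw).trans hzw⟩

theorem index_centralizer_singleton (τ : Q) :
    (Subgroup.centralizer {τ}).index = (conjugatesOf τ).ncard := by
  have horbit : MulAction.orbit (ConjAct Q) τ = conjugatesOf τ :=
    Set.ext fun _ => ConjAct.mem_orbit_conjAct.trans isConj_comm
  rw [← horbit, ← MulAction.index_stabilizer, Subgroup.centralizer_eq_comap_stabilizer]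
  exact Subgroup.index_comap_of_surjective _ ConjAct.toConjAct.surjective

theorem finiteIndex_center_of_finite_conjugatesOf {τ : Q}
    (hτ : Subgroup.normalClosure {τ} = ⊤) (hconj : (conjugatesOf τ).Finite) :
    (Subgroup.center Q).FiniteIndex := by
  have : (Subgroup.centralizer {τ}).FiniteIndex :=
    ⟨index_centralizer_singleton τ ▸ Set.ncard_ne_zero_of_mem mem_conjugatesOf_self hconj⟩
  set K := (Subgroup.centralizer {τ}).normalCore
  have hτK : τ ∈ Subgroup.centralizer (K : Set Q) :=
    Subgroup.mem_centralizer_iff.2 fun g hg =>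
      Subgroup.mem_centralizer_singleton_iff.1 (Subgroup.normalCore_le _ hg)
  have htop : Subgroup.centralizer (K : Set Q) = ⊤ := by
    rw [← top_le_iff, ← hτ]
    exact Subgroup.normalClosure_le_normal (Set.singleton_subset_iff.2 hτK)
  exact Subgroup.finiteIndex_of_le (Subgroup.centralizer_eq_top_iff_subset.1 htop)

theorem zpowers_sup_commutator_eq_top {τ : Q} (hτ : Subgroup.normalClosure {τ} = ⊤) :
    Subgroup.zpowers τ ⊔ commutator Q = ⊤ := by
  have hnormal : (Subgroup.zpowers τ ⊔ commutator Q).Normal :=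
    Subgroup.Normal.of_commutator_le Q le_sup_right
  rw [← top_le_iff, ← hτ]
  exact Subgroup.normalClosure_le_normal
    (Set.singleton_subset_iff.2 (Subgroup.mem_sup_left (Subgroup.mem_zpowers τ)))

/-- A form of Dietzmann's lemma. The centre has finite index, so the commutator subgroup is finite
by Schur's theorem, and the abelianization is generated by the image of `τ`. -/
theorem finite_of_normalClosure_eq_top {τ : Q} (hτ : Subgroup.normalClosure {τ} = ⊤)
    (hconj : (conjugatesOf τ).Finite) (hord : IsOfFinOrder τ) : Finite Q := by
  have := finiteIndex_center_of_finite_conjugatesOf hτ hconj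
  have := finite_commutatorSet_of_finiteIndex_center (Q := Q)
  have hcomm : (commutator Q : Set Q).Finite :=
    Set.finite_coe_iff.1 (inferInstanceAs (Finite (commutator Q)))
  have hmul := hord.finite_zpowers.mul hcomm
  rw [← Subgroup.mul_normal, zpowers_sup_commutator_eq_top hτ, Subgroup.coe_top] at hmul
  exact Set.finite_univ_iff.1 hmul

end FiniteGroups

section FiniteIndex

variable {M ι : Type*} [AddCommGroup M] {ω : LinearMap.BilinForm ℤ M} {hω : ω.IsAlt} {e f : ι → M}

local notation "T" => sympTransvection hω

theorem IsHyperbolicFamily.mk_sympTransvection_smul_eq (h : IsHyperbolicFamily ω e f)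
    {N : Subgroup (isometryGroup ω)} [N.Normal] {m : ℤ} (hN : ∀ u t, T u (m * t) ∈ N) {i j : ι}
    (hij : i ≠ j) {g₁ g₂ : isometryGroup ω} {y : M} (hg : g₁ • e i - g₂ • e i = m • y) :
    (T (g₁ • e i) 1 : isometryGroup ω ⧸ N) = T (g₂ • e i) 1 := by
  set g := g₁⁻¹ * g₂
  have hF : ω (g • -f i) (g • e i) = 1 := by
    rw [isometryGroup_smul_smul, map_neg, LinearMap.neg_apply, hω.neg_eq, h.left_right_self]
  have hv : e i = g • e i + m • g₁⁻¹ • y := by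
    rw [smul_comm m g₁⁻¹ y, ← hg, smul_sub, inv_smul_smul, mul_smul, add_sub_cancel]
  obtain ⟨⟨n, hn⟩, hne⟩ := MulAction.orbit_eq_iff.1 (h.orbit_eq_of_eq_add_smul hN hij hF hv)
  have hne : n • e i = g • e i := hne
  have hconj : T (g₂ • e i) 1 = (g₁ * n * g₁⁻¹) * T (g₁ • e i) 1 * (g₁ * n * g₁⁻¹)⁻¹ := by
    rw [sympTransvection_conj, ← mul_smul, inv_mul_cancel_right, mul_smul, hne, ← mul_smul,
      mul_inv_cancel_left]
  have hn₁ : ((g₁ * n * g₁⁻¹ : isometryGroup ω) : isometryGroup ω ⧸ N) = 1 :=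
    (QuotientGroup.eq_one_iff _).2 (Subgroup.Normal.conj_mem inferInstance n hn g₁)
  rw [hconj, QuotientGroup.mk_mul, QuotientGroup.mk_mul, QuotientGroup.mk_inv, hn₁, one_mul,
    inv_one, mul_one]

theorem IsSymplecticBasis.finite_quotient_smul_top [Finite ι] (h : IsSymplecticBasis ω e f) {m : ℤ}
    (hm : m ≠ 0) : Finite (M ⧸ (Ideal.span {m} • ⊤ : Submodule ℤ M)) := by
  have : Finite (ℤ ⧸ Ideal.span {m}) :=
    Ideal.finiteQuotientOfFreeOfNeBot _ (by rwa [Ne, Ideal.span_singleton_eq_bot])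
  exact Submodule.finite_quotient_smul _
    ⟨((Set.finite_range e).union (Set.finite_range f)).toFinset, by
      rw [Set.Finite.coe_toFinset, h.span_eq_top]⟩

theorem IsSymplecticBasis.finite_range_mk_sympTransvection_smul [Finite ι]
    (h : IsSymplecticBasis ω e f) {N : Subgroup (isometryGroup ω)} [N.Normal] {m : ℤ} (hm : m ≠ 0)
    (hN : ∀ u t, T u (m * t) ∈ N) {i j : ι} (hij : i ≠ j) :
    (Set.range fun g : isometryGroup ω =>
      (T (g • e i) 1 : isometryGroup ω ⧸ N)).Finite := by
  have := h.finite_quotient_smul_top hm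
  set Φ : isometryGroup ω → isometryGroup ω ⧸ N := fun g => T (g • e i) 1
  set c : isometryGroup ω → M ⧸ (Ideal.span {m} • ⊤ : Submodule ℤ M) :=
    fun g => Submodule.Quotient.mk (g • e i)
  have hfactors : Function.FactorsThrough Φ c := by
    intro g₁ g₂ hg
    have hmem := (Submodule.Quotient.eq _).1 hg
    rw [Submodule.ideal_span_singleton_smul, Submodule.mem_smul_pointwise_iff_exists] at hmem
    obtain ⟨y, -, hy⟩ := hmem
    exact h.mk_sympTransvection_smul_eq hN hij hy.symm
  refine (Set.finite_range (Function.extend c Φ 1)).subset ?_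
  rintro _ ⟨g, rfl⟩
  exact ⟨c g, hfactors.extend_apply _ g⟩

theorem IsSymplecticBasis.finiteIndex_of_sympTransvection_mem [Finite ι] [Nontrivial ι]
    (h : IsSymplecticBasis ω e f) {m : ℕ} (hm : m ≠ 0) {H : Subgroup (isometryGroup ω)}
    (hH : ∀ u t, T u (m * t) ∈ H) : H.FiniteIndex := by
  obtain ⟨i, j, hij⟩ := exists_pair_ne ι
  set N := Subgroup.closure {g | ∃ u, ∃ t : ℤ, g = T u (m * t)}
  have : N.Normal := normal_closure_sympTransvection hω (m : ℤ)
  have hNH : N ≤ H := (Subgroup.closure_le _).2 (by rintro _ ⟨u, t, rfl⟩; exact hH u t)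
  have hN : ∀ u t, T u (m * t) ∈ N := fun u t => Subgroup.subset_closure ⟨u, t, rfl⟩
  have hsurj := QuotientGroup.mk'_surjective N
  have hgen : Subgroup.normalClosure {(T (e i) 1 : isometryGroup ω ⧸ N)} = ⊤ := by
    have hmap := Subgroup.map_normalClosure {T (e i) 1} _ hsurj
    rw [h.normalClosure_sympTransvection_eq_top, Subgroup.map_top_of_surjective _ hsurj,
      Set.image_singleton] at hmap
    exact hmap.symm
  have hconj : (conjugatesOf (T (e i) 1 : isometryGroup ω ⧸ N)).Finite := by
    refine (h.finite_range_mk_sympTransvection_smul (mod_cast hm) hN hij).subset fun x hx => ?_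
    obtain ⟨q, rfl⟩ := isConj_iff.1 hx
    obtain ⟨g, rfl⟩ := hsurj q
    exact ⟨g, congrArg _ (sympTransvection_conj hω g (e i) 1).symm⟩
  have hord : IsOfFinOrder (T (e i) 1 : isometryGroup ω ⧸ N) := by
    refine isOfFinOrder_iff_pow_eq_one.2 ⟨m, Nat.pos_of_ne_zero hm, ?_⟩
    rw [← QuotientGroup.mk_pow, QuotientGroup.eq_one_iff, ← zpow_natCast, sympTransvection_zpow]
    exact hN _ _
  have := finite_of_normalClosure_eq_top hgen hconj hord
  have : N.FiniteIndex := Subgroup.finiteIndex_of_finite_quotient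
  exact Subgroup.finiteIndex_of_le hNH

end FiniteIndex

/-! ### The symplectic group of integral matrices -/

section Matrices

theorem transpose_mul_mul_eq_iff_mem_isometryGroup {ι R : Type*} [Fintype ι] [DecidableEq ι]
    [CommRing R] (J : Matrix ι ι R) (g : GL ι R) :
    g.valᵀ * J * g.val = J ↔
      GeneralLinearGroup.toLin.trans (LinearMap.GeneralLinearGroup.generalLinearEquiv R (ι → R)) g ∈
        isometryGroup (toBilin' J) := by
  rw [← (toBilin' (R₁ := R) (n := ι)).injective.eq_iff, ← toBilin'_comp, LinearMap.ext_iff₂]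
  rfl

/-- The alternating form `(x, y) ↦ xᵀ J y` on `ℤ²ⁿ`. -/
def stdSymplecticForm (n : ℕ) : LinearMap.BilinForm ℤ (Fin n ⊕ Fin n → ℤ) :=
  toBilin' (Jstd n)

theorem stdSymplecticForm_elim {n : ℕ} (a b c d : Fin n → ℤ) :
    stdSymplecticForm n (Sum.elim a b) (Sum.elim c d) = a ⬝ᵥ d - b ⬝ᵥ c := by
  rw [stdSymplecticForm, toBilin'_apply', Jstd, fromBlocks_mulVec, sumElim_dotProduct_sumElim,
    Sum.elim_comp_inl, Sum.elim_comp_inr, zero_mulVec, zero_mulVec, one_mulVec, neg_mulVec,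
    one_mulVec, zero_add, add_zero, dotProduct_neg, sub_eq_add_neg]

theorem stdSymplecticForm_isAlt (n : ℕ) : (stdSymplecticForm n).IsAlt := fun x => by
  rw [← Sum.elim_comp_inl_inr x, stdSymplecticForm_elim, dotProduct_comm, sub_self]

theorem stdSymplecticForm_isSymplecticBasis (n : ℕ) :
    IsSymplecticBasis (stdSymplecticForm n) (fun i => Sum.elim (Pi.single i 1) 0)
      (fun i => Sum.elim 0 (Pi.single i 1)) where
  left_left i j := by
    rw [stdSymplecticForm_elim, dotProduct_zero, zero_dotProduct, sub_self]
  right_right i j := by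
    rw [stdSymplecticForm_elim, dotProduct_zero, zero_dotProduct, sub_self]
  left_right_self i := by
    rw [stdSymplecticForm_elim, dotProduct_zero, sub_zero, single_one_dotProduct,
      Pi.single_eq_same]
  left_right_of_ne hij := by
    rw [stdSymplecticForm_elim, dotProduct_zero, sub_zero, single_one_dotProduct,
      Pi.single_eq_of_ne hij]
  span_eq_top := by
    rw [← top_le_iff, ← (Pi.basisFun ℤ (Fin n ⊕ Fin n)).span_eq]
    refine Submodule.span_mono ?_
    rintro _ ⟨i | i, rfl⟩ <;> rw [Pi.basisFun_apply]
    exacts [.inl ⟨i, Sum.elim_single_zero i 1⟩, .inr ⟨i, Sum.elim_zero_single i 1⟩]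

/-- A matrix in `Sp_{2n}(ℤ)`, seen as an isometry of `ℤ²ⁿ`. -/
noncomputable def mulEquivIsometryGroup (n : ℕ) : SpZ n ≃* isometryGroup (stdSymplecticForm n) :=
  let φ := GeneralLinearGroup.toLin.trans
    (LinearMap.GeneralLinearGroup.generalLinearEquiv ℤ (Fin n ⊕ Fin n → ℤ))
  have hφ : SpZ n = (isometryGroup (stdSymplecticForm n)).comap φ.toMonoidHom :=
    Subgroup.ext (transpose_mul_mul_eq_iff_mem_isometryGroup (Jstd n))
  (φ.subgroupMap (SpZ n)).trans <| MulEquiv.subgroupCongr <| by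
    rw [hφ]
    exact Subgroup.map_comap_eq_self_of_surjective φ.surjective _

theorem mulEquivIsometryGroup_symm_mulVec {n : ℕ} (g : isometryGroup (stdSymplecticForm n))
    (x : Fin n ⊕ Fin n → ℤ) : ((mulEquivIsometryGroup n).symm g).1.val *ᵥ x = g • x :=
  congrArg (· • x) ((mulEquivIsometryGroup n).apply_symm_apply g)

theorem exists_eq_elim_zero_of_mem_span {n : ℕ} {u : Fin n ⊕ Fin n → ℤ}
    (hu : u ∈ Submodule.span ℤ
      (Set.range fun i : Fin n => Sum.elim (Pi.single i (1 : ℤ)) (0 : Fin n → ℤ))) :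
    ∃ a : Fin n → ℤ, u = Sum.elim a (0 : Fin n → ℤ) := by
  have hur : u ∘ Sum.inr = 0 :=
    Submodule.span_le (p := LinearMap.ker (LinearMap.funLeft ℤ ℤ Sum.inr)) |>.2
      (Set.range_subset_iff.2 fun _ => rfl) hu
  exact ⟨u ∘ Sum.inl, by rw [← hur, Sum.elim_comp_inl_inr]⟩

theorem exists_eq_zero_elim_of_mem_span {n : ℕ} {u : Fin n ⊕ Fin n → ℤ}
    (hu : u ∈ Submodule.span ℤ
      (Set.range fun i : Fin n => Sum.elim (0 : Fin n → ℤ) (Pi.single i (1 : ℤ)))) :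
    ∃ a : Fin n → ℤ, u = Sum.elim (0 : Fin n → ℤ) a := by
  have hul : u ∘ Sum.inl = 0 :=
    Submodule.span_le (p := LinearMap.ker (LinearMap.funLeft ℤ ℤ Sum.inl)) |>.2
      (Set.range_subset_iff.2 fun _ => rfl) hu
  exact ⟨u ∘ Sum.inr, by rw [← hul, Sum.elim_comp_inl_inr]⟩

theorem mulEquivIsometryGroup_symm_sympTransvection_elim_zero {n : ℕ} (a : Fin n → ℤ) (t : ℤ) :
    ((mulEquivIsometryGroup n).symm
      (sympTransvection (stdSymplecticForm_isAlt n) (Sum.elim a 0) t)).1.val =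
      fromBlocks 1 (t • vecMulVec a a) 0 1 := by
  refine ext_iff_mulVec.2 fun x => ?_
  obtain ⟨y, z, rfl⟩ : ∃ y z, x = Sum.elim y z := ⟨_, _, (Sum.elim_comp_inl_inr x).symm⟩
  rw [mulEquivIsometryGroup_symm_mulVec, sympTransvection_smul, stdSymplecticForm_elim,
    zero_dotProduct, sub_zero, fromBlocks_mulVec, Sum.elim_comp_inl, Sum.elim_comp_inr, one_mulVec,
    one_mulVec, zero_mulVec, smul_mulVec, vecMulVec_mulVec, op_smul_eq_smul, smul_smul]
  ext (i | i)
  · rfl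
  · simp only [Sum.elim_inr, Pi.add_apply, Pi.smul_apply, Pi.zero_apply, smul_zero, zero_add,
      add_zero]

theorem mulEquivIsometryGroup_symm_sympTransvection_zero_elim {n : ℕ} (a : Fin n → ℤ) (t : ℤ) :
    ((mulEquivIsometryGroup n).symm
      (sympTransvection (stdSymplecticForm_isAlt n) (Sum.elim 0 a) t)).1.val =
      fromBlocks 1 0 (-t • vecMulVec a a) 1 := by
  refine ext_iff_mulVec.2 fun x => ?_
  obtain ⟨y, z, rfl⟩ : ∃ y z, x = Sum.elim y z := ⟨_, _, (Sum.elim_comp_inl_inr x).symm⟩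
  rw [mulEquivIsometryGroup_symm_mulVec, sympTransvection_smul, stdSymplecticForm_elim,
    zero_dotProduct, zero_sub, fromBlocks_mulVec, Sum.elim_comp_inl, Sum.elim_comp_inr, one_mulVec,
    one_mulVec, zero_mulVec, smul_mulVec, vecMulVec_mulVec, op_smul_eq_smul, smul_smul,
    mul_neg, ← neg_mul]
  ext (i | i)
  · simp only [Sum.elim_inl, Pi.add_apply, Pi.smul_apply, Pi.zero_apply, smul_zero,
      add_zero]
  · exact add_comm _ _

theorem finiteIndex_of_fromBlocks_mem {n k : ℕ} [Nontrivial (Fin n)] (hk : k ≠ 0)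
    {H : Subgroup (SpZ n)}
    (hupper : ∀ (a : Fin n → ℤ) (t : ℤ) (g : SpZ n),
      g.1.val = fromBlocks 1 ((k * t) • vecMulVec a a) 0 1 → g ∈ H)
    (hlower : ∀ (a : Fin n → ℤ) (t : ℤ) (g : SpZ n),
      g.1.val = fromBlocks 1 0 ((k * t) • vecMulVec a a) 1 → g ∈ H) : H.FiniteIndex := by
  let φ := mulEquivIsometryGroup n
  have hbasis := stdSymplecticForm_isSymplecticBasis n
  have hmem : ∀ x t, sympTransvection (stdSymplecticForm_isAlt n) x ((k ^ 5 : ℕ) * t) ∈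
      H.comap φ.symm.toMonoidHom := by
    intro x t
    rw [Nat.cast_pow]
    refine hbasis.sympTransvection_mem (fun u hu t => ?_) (fun u hu t => ?_) x t
    · obtain ⟨a, rfl⟩ := exists_eq_elim_zero_of_mem_span hu
      exact Subgroup.mem_comap.2 <|
        hupper a t _ (mulEquivIsometryGroup_symm_sympTransvection_elim_zero a _)
    · obtain ⟨a, rfl⟩ := exists_eq_zero_elim_of_mem_span hu
      refine Subgroup.mem_comap.2 (hlower a (-t) _ ?_)
      rw [mul_neg]
      exact mulEquivIsometryGroup_symm_sympTransvection_zero_elim a _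
  have hindex := (hbasis.finiteIndex_of_sympTransvection_mem (pow_ne_zero 5 hk) hmem).index_ne_zero
  exact ⟨by rwa [Subgroup.index_comap_of_surjective _ φ.symm.surjective] at hindex⟩

end Matrices

/-- For `n ≥ 2` and `k ≥ 1`, the subgroup of `Sp_{2n}(ℤ)` generated by the
matrices `(I, B; 0, I)` and `(I, 0; C, I)` with `B`, `C` symmetric integer matrices all of
whose entries are divisible by `k`, has finite index in `Sp_{2n}(ℤ)`. -/
theorem siegel_unipotent_generators_finite_index (n k : ℕ) (hn : 2 ≤ n) (hk : 1 ≤ k) :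
    (Subgroup.closure
      ({g : SpZ n | ∃ B : Matrix (Fin n) (Fin n) ℤ, Bᵀ = B ∧ (∀ i j, (k : ℤ) ∣ B i j) ∧
          (g : GL (Fin n ⊕ Fin n) ℤ).val = Matrix.fromBlocks 1 B 0 1} ∪
       {g : SpZ n | ∃ C : Matrix (Fin n) (Fin n) ℤ, Cᵀ = C ∧ (∀ i j, (k : ℤ) ∣ C i j) ∧
          (g : GL (Fin n ⊕ Fin n) ℤ).val = Matrix.fromBlocks 1 0 C 1})).FiniteIndex := by
  have : Nontrivial (Fin n) := Fin.nontrivial_iff_two_le.2 hn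
  have hsymm (a : Fin n → ℤ) (s : ℤ) : (s • vecMulVec a a)ᵀ = s • vecMulVec a a := by
    rw [transpose_smul, transpose_vecMulVec]
  have hdvd (a : Fin n → ℤ) (t : ℤ) (i j : Fin n) : (k : ℤ) ∣ ((k * t) • vecMulVec a a) i j :=
    (dvd_mul_right _ _).mul_right _
  refine finiteIndex_of_fromBlocks_mem (Nat.one_le_iff_ne_zero.1 hk) (fun a t g hg => ?_)
    fun a t g hg => ?_
  · exact Subgroup.subset_closure (.inl ⟨_, hsymm a _, hdvd a t, hg⟩)
  · exact Subgroup.subset_closure (.inr ⟨_, hsymm a _, hdvd a t, hg⟩)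
end

section
/- Let K be a number field with ring of integers O_K, let n ≥ 3 and let k ≥ 1 be an integer. Then the subgroup of SL_n(O_K) generated by the upper triangular unipotent matrices and the lower triangular unipotent matrices all of whose off-diagonal entries lie in the ideal kO_K has finite index in SL_n(O_K). -/
open NumberField

/-!
Let `E_n(J)` be the subgroup of `SL_n(R)` generated by the transvections with entry in the ideal
`J`; it is contained in the group generated by the two families of unipotents of level `J`.

*From `E_n(R)` to `E_n(J)`.* By Suslin's factorization of rank one unipotents, `E_n(J)` contains
the normal closure `N` of `E_n(J²)`. Modulo `N` the group `E_n(R)` is perfect, and its subgroup of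
matrices congruent to `1` modulo `J²`, which has finite index, is central: this follows from the
normality of the elementary subgroup over the double `R ×_{R/J²} R`. By Schur's theorem the image
of `E_n(R)` is finite, so `E_n(J)` has finite index if `E_n(R)` has.

*From `n` to `3`.* Proper quotients of `R` are finite, so unimodular columns of length at least `3`
can be reduced by elementary operations, whence `SL_{n+1}(R) = E_{n+1}(R) SL_n(R)`.

*The group `SL_3(R) / E_3(R)`.* It is the image of `SL_2(R)`, and the class of a matrix depends only
on its first row: it is a Mennicke symbol. Mennicke's relation makes the group abelian and torsion,
so it is finite as soon as it is finitely generated.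

*Finite generation.* Fix `m ≠ 0` such that every ideal class contains an ideal containing `m`, and
let `SL_2(R)` act on the matrices of determinant `m`. Division with remainder holds after
multiplying the dividend by an element of a finite set. It replaces the second column of a matrix
by a vector whose second entry has smaller norm than the lower left entry of the matrix, and which
finiteness of the class group completes to a matrix of determinant `m`. Right multiplication by
`!![1, m l; 0, 1]` is left multiplication by a rank one unipotent, which dies in `SL_3(R) / E_3(R)`,
so only finitely many quotients matter and each step of this descent uses one of finitely many
elements of `SL_2(R)`.
-/

namespace UnipotentGenerators

open Matrix hiding transvection
open Matrix.SpecialLinearGroup (transvection transvection_coe transvection_add transvection_inv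
  transvection_coeff_zero)
open scoped commutatorElement

theorem exists_ne_ne {ι : Type*} [Fintype ι] (hι : 3 ≤ Fintype.card ι) (p q : ι) :
    ∃ l, l ≠ p ∧ l ≠ q :=
  ENat.exists_ne_ne_of_three_le (by simpa [ENat.card_eq_coe_fintype_card] using hι) p q

/-! ### Rank one unipotent matrices -/

section RankOne

variable {ι R : Type*} [Fintype ι] [DecidableEq ι] [CommRing R]

theorem coe_injective :
    Function.Injective ((↑) : SpecialLinearGroup ι R → Matrix ι ι R) :=
  Subtype.val_injective

omit [Fintype ι] in
theorem vecMulVec_single_single (i j : ι) (x y : R) :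
    vecMulVec (Pi.single i x) (Pi.single j y) = single i j (x * y) := by
  rw [← mul_one x, ← mul_one y, ← smul_eq_mul x, ← smul_eq_mul y, Pi.single_smul, Pi.single_smul,
    smul_vecMulVec, vecMulVec_smul, ← single_eq_single_vecMulVec_single, smul_single, smul_single]
  simp

open Classical in
/-- The matrix `1 + v wᵀ` as an element of `SL`, when `w ⬝ᵥ v = 0`; the junk value is `1`. -/
noncomputable def rankOne (v w : ι → R) : SpecialLinearGroup ι R :=
  if h : w ⬝ᵥ v = 0 then
    ⟨1 + vecMulVec v w, by
      rw [vecMulVec_eq Unit, det_one_add_replicateCol_mul_replicateRow, h, add_zero]⟩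
  else 1

theorem coe_rankOne {v w : ι → R} (h : w ⬝ᵥ v = 0) :
    (rankOne v w : Matrix ι ι R) = 1 + vecMulVec v w := by
  simp [rankOne, h]

theorem rankOne_zero_left (w : ι → R) : rankOne 0 w = 1 := by
  apply coe_injective
  simp [coe_rankOne]

theorem rankOne_zero_right (v : ι → R) : rankOne v 0 = 1 := by
  apply coe_injective
  simp [coe_rankOne]

theorem rankOne_add_left {v₁ v₂ w : ι → R} (h₁ : w ⬝ᵥ v₁ = 0) (h₂ : w ⬝ᵥ v₂ = 0) :
    rankOne (v₁ + v₂) w = rankOne v₁ w * rankOne v₂ w := by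
  apply coe_injective
  rw [Matrix.SpecialLinearGroup.coe_mul, coe_rankOne h₁, coe_rankOne h₂,
    coe_rankOne (by rw [dotProduct_add, h₁, h₂, add_zero])]
  simp only [mul_add, add_mul, one_mul, mul_one, vecMulVec_mul_vecMulVec, h₂, zero_smul,
    add_vecMulVec, vecMulVec_zero, add_zero, add_assoc]

theorem rankOne_add_right {v w₁ w₂ : ι → R} (h₁ : w₁ ⬝ᵥ v = 0) (h₂ : w₂ ⬝ᵥ v = 0) :
    rankOne v (w₁ + w₂) = rankOne v w₁ * rankOne v w₂ := by
  apply coe_injective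
  rw [Matrix.SpecialLinearGroup.coe_mul, coe_rankOne h₁, coe_rankOne h₂,
    coe_rankOne (by rw [add_dotProduct, h₁, h₂, add_zero])]
  simp only [mul_add, add_mul, one_mul, mul_one, vecMulVec_mul_vecMulVec, h₁, zero_smul,
    vecMulVec_add, vecMulVec_zero, add_zero]
  abel

theorem rankOne_neg_right {v w : ι → R} (h : w ⬝ᵥ v = 0) :
    rankOne v (-w) = (rankOne v w)⁻¹ := by
  rw [eq_comm, inv_eq_iff_mul_eq_one, ← rankOne_add_right h (by simp [h]), add_neg_cancel,
    rankOne_zero_right]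

theorem rankOne_smul_left (c : R) {v w : ι → R} (h : w ⬝ᵥ v = 0) :
    rankOne (c • v) w = rankOne v (c • w) := by
  apply coe_injective
  rw [coe_rankOne (by simp [h]), coe_rankOne (by simp [h]), smul_vecMulVec, vecMulVec_smul]

theorem conj_rankOne (g : SpecialLinearGroup ι R) {v w : ι → R} (h : w ⬝ᵥ v = 0) :
    g * rankOne v w * g⁻¹ = rankOne (g.1 *ᵥ v) (w ᵥ* (g⁻¹).1) := by
  have hg : (g⁻¹).1 * g.1 = 1 := congrArg Subtype.val (inv_mul_cancel g)
  have hg' : g.1 * (g⁻¹).1 = 1 := congrArg Subtype.val (mul_inv_cancel g)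
  have h' : (w ᵥ* (g⁻¹).1) ⬝ᵥ (g.1 *ᵥ v) = 0 := by
    rw [dotProduct_mulVec, vecMul_vecMul, hg, vecMul_one, h]
  apply coe_injective
  rw [Matrix.SpecialLinearGroup.coe_mul, Matrix.SpecialLinearGroup.coe_mul, coe_rankOne h,
    coe_rankOne h', mul_add, add_mul, mul_one, hg', mul_vecMulVec, vecMulVec_mul]

theorem rankOne_sum_left_mem {κ : Type*} (H : Subgroup (SpecialLinearGroup ι R)) (w : ι → R)
    (s : Finset κ) (f : κ → ι → R) (hf : ∀ a ∈ s, w ⬝ᵥ f a = 0 ∧ rankOne (f a) w ∈ H) :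
    rankOne (∑ a ∈ s, f a) w ∈ H := by
  refine (Finset.sum_induction f (fun v => w ⬝ᵥ v = 0 ∧ rankOne v w ∈ H) ?_ ?_ hf).2
  · rintro v₁ v₂ ⟨h₁, hv₁⟩ ⟨h₂, hv₂⟩
    exact ⟨by rw [dotProduct_add, h₁, h₂, add_zero],
      rankOne_add_left h₁ h₂ ▸ H.mul_mem hv₁ hv₂⟩
  · exact ⟨dotProduct_zero w, rankOne_zero_left w ▸ H.one_mem⟩

theorem rankOne_sum_right_mem {κ : Type*} (H : Subgroup (SpecialLinearGroup ι R)) (v : ι → R)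
    (s : Finset κ) (f : κ → ι → R) (hf : ∀ a ∈ s, f a ⬝ᵥ v = 0 ∧ rankOne v (f a) ∈ H) :
    rankOne v (∑ a ∈ s, f a) ∈ H := by
  refine (Finset.sum_induction f (fun w => w ⬝ᵥ v = 0 ∧ rankOne v w ∈ H) ?_ ?_ hf).2
  · rintro w₁ w₂ ⟨h₁, hw₁⟩ ⟨h₂, hw₂⟩
    exact ⟨by rw [add_dotProduct, h₁, h₂, add_zero],
      rankOne_add_right h₁ h₂ ▸ H.mul_mem hw₁ hw₂⟩
  · exact ⟨zero_dotProduct v, rankOne_zero_right v ▸ H.one_mem⟩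

theorem commutator_rankOne {v w : ι → R} {l : ι} (h : w ⬝ᵥ v = 0) (hv : v l = 0) (hw : w l = 0) :
    ⁅rankOne v (Pi.single l 1), rankOne (Pi.single l 1) w⁆ = rankOne v w := by
  have hlv : (Pi.single l 1 : ι → R) ⬝ᵥ v = 0 := by simp [hv]
  have hwl : w ⬝ᵥ (Pi.single l 1 : ι → R) = 0 := by simp [hw]
  have hcol : (rankOne v (Pi.single l 1)).1 *ᵥ (Pi.single l 1 : ι → R) = v + Pi.single l 1 := by
    rw [coe_rankOne hlv, add_mulVec, one_mulVec, vecMulVec_mulVec]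
    simp [add_comm]
  have hrow : w ᵥ* ((rankOne v (Pi.single l 1))⁻¹).1 = w := by
    rw [← rankOne_neg_right hlv, coe_rankOne (by simp [hv]), vecMul_add, vecMul_one,
      vecMul_vecMulVec, h]
    simp
  rw [commutatorElement_def, conj_rankOne _ hwl, hcol, hrow, rankOne_add_left h hwl,
    mul_inv_cancel_right]

theorem rankOne_single_one_left {i j : ι} (hij : i ≠ j) (x : R) :
    rankOne (Pi.single i 1) (Pi.single j x) = transvection hij x := by
  apply coe_injective
  rw [coe_rankOne (by simp [hij]), transvection_coe, vecMulVec_single_single, one_mul]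

theorem rankOne_single_one_right {i j : ι} (hij : i ≠ j) (x : R) :
    rankOne (Pi.single i x) (Pi.single j 1) = transvection hij x := by
  apply coe_injective
  rw [coe_rankOne (by simp [hij.symm]), transvection_coe, vecMulVec_single_single, mul_one]

theorem commutator_transvection {i l j : ι} (hij : i ≠ j) (hil : i ≠ l) (hlj : l ≠ j) (x y : R) :
    ⁅transvection hil x, transvection hlj y⁆ = transvection hij (x * y) := by
  rw [← rankOne_single_one_right hil, ← rankOne_single_one_left hlj,
    commutator_rankOne (by simp [hij.symm]) (by simp [hil.symm]) (by simp [hlj])]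
  apply coe_injective
  rw [coe_rankOne (by simp [hij.symm]), transvection_coe, vecMulVec_single_single]

end RankOne

/-! ### Elementary subgroups and Suslin's normality theorem -/

section Elementary

variable {ι R : Type*} [Fintype ι] [DecidableEq ι] [CommRing R]

variable (ι) in
/-- The subgroup `E(J)` of `SL` generated by the transvections whose entry lies in the ideal `J`.
The elementary subgroup is the case `J = ⊤`. -/
def elementary (J : Ideal R) : Subgroup (SpecialLinearGroup ι R) :=
  Subgroup.closure {g | ∃ (i j : ι) (hij : i ≠ j), ∃ x ∈ J, transvection hij x = g}

theorem transvection_mem_elementary {J : Ideal R} {i j : ι} (hij : i ≠ j) {x : R} (hx : x ∈ J) :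
    transvection hij x ∈ elementary ι J :=
  Subgroup.subset_closure ⟨i, j, hij, x, hx, rfl⟩

theorem elementary_le_iff {J : Ideal R} {H : Subgroup (SpecialLinearGroup ι R)} :
    elementary ι J ≤ H ↔ ∀ (i j : ι) (hij : i ≠ j), ∀ x ∈ J, transvection hij x ∈ H := by
  rw [elementary, Subgroup.closure_le]
  refine ⟨fun h i j hij x hx => h ⟨i, j, hij, x, hx, rfl⟩, ?_⟩
  rintro h _ ⟨i, j, hij, x, hx, rfl⟩
  exact h i j hij x hx

theorem rankOne_single_right_mem_elementary {J : Ideal R} {v : ι → R} {p : ι} (hv : v p = 0)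
    {c : R} (hc : ∀ m, c * v m ∈ J) : rankOne v (Pi.single p c) ∈ elementary ι J := by
  have hsum : c • v = ∑ m, (Pi.single m (c * v m) : ι → R) :=
    (Finset.univ_sum_single (c • v)).symm
  rw [← mul_one c, ← smul_eq_mul, Pi.single_smul, ← rankOne_smul_left _ (by simp [hv]), hsum]
  refine rankOne_sum_left_mem _ _ _ _ fun m _ => ?_
  rcases eq_or_ne m p with rfl | hmp
  · rw [hv, mul_zero, Pi.single_zero, rankOne_zero_left]
    exact ⟨dotProduct_zero _, one_mem _⟩
  · rw [rankOne_single_one_right hmp]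
    exact ⟨by simp [hmp.symm], transvection_mem_elementary hmp (hc m)⟩

theorem rankOne_single_left_mem_elementary {J : Ideal R} {w : ι → R} {p : ι} (hwp : w p = 0)
    (hw : ∀ m, w m ∈ J) : rankOne (Pi.single p 1) w ∈ elementary ι J := by
  rw [← Finset.univ_sum_single w]
  refine rankOne_sum_right_mem _ _ _ _ fun m _ => ?_
  rcases eq_or_ne p m with rfl | hpm
  · rw [hwp, Pi.single_zero, rankOne_zero_right]
    exact ⟨zero_dotProduct _, one_mem _⟩
  · rw [rankOne_single_one_left hpm]
    exact ⟨by simp [hpm], transvection_mem_elementary hpm (hw m)⟩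

/-- The Koszul relation `v_q e_p - v_p e_q` between the coordinates `p` and `q` of `v`. -/
def koszulRow (v : ι → R) (p q : ι) : ι → R := Pi.single p (v q) - Pi.single q (v p)

theorem koszulRow_dotProduct (v : ι → R) (p q : ι) : koszulRow v p q ⬝ᵥ v = 0 := by
  simp [koszulRow, sub_dotProduct, mul_comm]

theorem eq_sum_smul_koszulRow {v w y : ι → R} (hy : y ⬝ᵥ v = 1) (hw : w ⬝ᵥ v = 0) :
    w = ∑ a : ι × ι, (w a.1 * y a.2) • koszulRow v a.1 a.2 := by
  ext m
  have hfst : ∑ q, w m * y q * v q = w m := by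
    simp only [mul_assoc, ← Finset.mul_sum]
    rw [← dotProduct, hy, mul_one]
  have hsnd : ∑ p, w p * y m * v p = 0 := by
    simp only [mul_right_comm _ (y m), ← Finset.sum_mul]
    rw [← dotProduct, hw, zero_mul]
  rw [Fintype.sum_prod_type]
  simp only [koszulRow, Finset.sum_apply, Pi.smul_apply, Pi.sub_apply, smul_eq_mul, mul_sub,
    Finset.sum_sub_distrib, Pi.single_apply, mul_ite, mul_zero]
  rw [Finset.sum_comm]
  simp only [Finset.sum_ite_eq, Finset.mem_univ, if_true, hfst, hsnd, sub_zero]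

/-- The part of `v` supported on `{p, q}`, for `p ≠ q`. -/
def pairPart (v : ι → R) (p q : ι) : ι → R := Pi.single p (v p) + Pi.single q (v q)

theorem koszulRow_dotProduct_pairPart (v : ι → R) {p q : ι} (hpq : p ≠ q) :
    koszulRow v p q ⬝ᵥ pairPart v p q = 0 := by
  simp [koszulRow, pairPart, hpq, hpq.symm, mul_comm]

omit [Fintype ι] in
theorem smul_koszulRow (v : ι → R) (p q : ι) (r : R) :
    r • koszulRow v p q = Pi.single p (r * v q) + Pi.single q (-(r * v p)) := by
  simp [koszulRow, ← Pi.single_smul, sub_eq_add_neg, Pi.single_neg]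

theorem rankOne_pairPart_mem_elementary (hι : 3 ≤ Fintype.card ι) {J : Ideal R} {a b : R}
    (ha : a ∈ J) (hb : b ∈ J) (v : ι → R) {p q : ι} (hpq : p ≠ q) :
    rankOne (pairPart v p q) ((a * b) • koszulRow v p q) ∈ elementary ι J := by
  obtain ⟨l, hlp, hlq⟩ := exists_ne_ne hι p q
  have hdot := koszulRow_dotProduct_pairPart v hpq
  have hcol : rankOne (a • pairPart v p q) (Pi.single l 1) ∈ elementary ι J :=
    rankOne_single_right_mem_elementary (by simp [pairPart, hlp, hlq]) fun m => by
      rw [one_mul]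
      exact J.mul_mem_right _ ha
  have hrow : rankOne (Pi.single l 1) (b • koszulRow v p q) ∈ elementary ι J :=
    rankOne_single_left_mem_elementary (by simp [koszulRow, hlp, hlq]) fun m =>
      J.mul_mem_right _ hb
  rw [mul_smul, ← rankOne_smul_left _ (by simp [hdot]), ← commutator_rankOne (l := l)
    (by simp [hdot]) (by simp [pairPart, hlp, hlq]) (by simp [koszulRow, hlp, hlq])]
  exact Subgroup.commutator_le_self _ (Subgroup.commutator_mem_commutator hcol hrow)

theorem rankOne_sub_pairPart_mem_elementary {J : Ideal R} {r : R} (hr : r ∈ J) (v : ι → R)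
    {p q : ι} (hpq : p ≠ q) :
    rankOne (v - pairPart v p q) (r • koszulRow v p q) ∈ elementary ι J := by
  have hp : (v - pairPart v p q) p = 0 := by simp [pairPart, hpq]
  have hq : (v - pairPart v p q) q = 0 := by simp [pairPart, hpq.symm]
  rw [smul_koszulRow, rankOne_add_right (by rw [single_dotProduct, hp, mul_zero])
    (by rw [single_dotProduct, hq, mul_zero])]
  exact mul_mem
    (rankOne_single_right_mem_elementary hp fun m => J.mul_mem_right _ (J.mul_mem_right _ hr))
    (rankOne_single_right_mem_elementary hq fun m =>
      J.mul_mem_right _ (J.neg_mem (J.mul_mem_right _ hr)))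

theorem rankOne_smul_koszulRow_mem_elementary (hι : 3 ≤ Fintype.card ι) {J : Ideal R} {a b : R}
    (ha : a ∈ J) (hb : b ∈ J) (v : ι → R) (p q : ι) :
    rankOne v ((a * b) • koszulRow v p q) ∈ elementary ι J := by
  rcases eq_or_ne p q with rfl | hpq
  · simp [koszulRow, rankOne_zero_right, one_mem]
  have hpair := koszulRow_dotProduct_pairPart v hpq
  have hsplit : rankOne v ((a * b) • koszulRow v p q) =
      rankOne (pairPart v p q) ((a * b) • koszulRow v p q) *
        rankOne (v - pairPart v p q) ((a * b) • koszulRow v p q) := by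
    rw [← rankOne_add_left (by simp [hpair]) (by simp [dotProduct_sub, hpair,
      koszulRow_dotProduct]), add_sub_cancel]
  rw [hsplit]
  exact mul_mem (rankOne_pairPart_mem_elementary hι ha hb v hpq)
    (rankOne_sub_pairPart_mem_elementary (J.mul_mem_right _ ha) v hpq)

theorem rankOne_mul_smul_mem_elementary (hι : 3 ≤ Fintype.card ι) {J : Ideal R} {a b : R}
    (ha : a ∈ J) (hb : b ∈ J) {v w y : ι → R} (hy : y ⬝ᵥ v = 1) (hw : w ⬝ᵥ v = 0) :
    rankOne v ((a * b) • w) ∈ elementary ι J := by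
  rw [eq_sum_smul_koszulRow hy hw, Finset.smul_sum]
  refine rankOne_sum_right_mem _ _ _ _ fun c _ => ?_
  rw [smul_smul, mul_assoc]
  exact ⟨by simp [koszulRow_dotProduct],
    rankOne_smul_koszulRow_mem_elementary hι ha (J.mul_mem_right _ hb) v c.1 c.2⟩

theorem conj_transvection_mem_elementary (hι : 3 ≤ Fintype.card ι) {J : Ideal R}
    (g : SpecialLinearGroup ι R) {i j : ι} (hij : i ≠ j) {x : R} (hx : x ∈ J * J) :
    g * transvection hij x * g⁻¹ ∈ elementary ι J := by
  induction hx using Submodule.mul_induction_on' with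
  | mem_mul_mem a ha b hb =>
    have hg : (g⁻¹).1 * g.1 = 1 := congrArg Subtype.val (inv_mul_cancel g)
    rw [← rankOne_single_one_left hij, conj_rankOne _ (by simp [hij]), ← mul_one (a * b),
      ← smul_eq_mul (a * b), Pi.single_smul, smul_vecMul]
    apply rankOne_mul_smul_mem_elementary hι ha hb (y := Pi.single i 1 ᵥ* (g⁻¹).1)
    · rw [dotProduct_mulVec, vecMul_vecMul, hg, vecMul_one]
      simp
    · rw [dotProduct_mulVec, vecMul_vecMul, hg, vecMul_one]
      simp [hij]
  | add x _ y _ hx hy =>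
    rw [transvection_add, ← conj_mul]
    exact mul_mem hx hy

theorem normalClosure_elementary_mul_self_le (hι : 3 ≤ Fintype.card ι) (J : Ideal R) :
    Subgroup.normalClosure (elementary ι (J * J) : Set (SpecialLinearGroup ι R)) ≤
      elementary ι J := by
  rw [elementary, Subgroup.normalClosure_closure_eq_normalClosure, Subgroup.normalClosure,
    Subgroup.closure_le]
  intro a ha
  obtain ⟨_, ⟨i, j, hij, x, hx, rfl⟩, hconj⟩ := Group.mem_conjugatesOfSet_iff.1 ha
  obtain ⟨g, rfl⟩ := isConj_iff.1 hconj
  exact conj_transvection_mem_elementary hι g hij hx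

/-- **Suslin's normality theorem.** -/
theorem normal_elementary_top (hι : 3 ≤ Fintype.card ι) :
    (elementary ι (⊤ : Ideal R)).Normal := by
  have h := normalClosure_elementary_mul_self_le hι (⊤ : Ideal R)
  rw [Ideal.mul_top] at h
  rw [← h.antisymm Subgroup.le_normalClosure]
  exact Subgroup.normalClosure_normal

end Elementary

/-! ### From the elementary subgroup to the elementary subgroup of an ideal -/

section FiniteIndex

variable {G : Type*} [Group G]

theorem finite_commutatorSet_of_finiteIndex_center [(Subgroup.center G).FiniteIndex] :
    Finite (commutatorSet G) := by
  have hleft : ∀ g h : G, ∀ c ∈ Subgroup.center G, ⁅g * c, h⁆ = ⁅g, h⁆ := fun g h c hc => by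
    rw [commutatorElement_def, mul_assoc g c h, ← Subgroup.mem_center_iff.1 hc h]
    group
  have hright : ∀ g h : G, ∀ c ∈ Subgroup.center G, ⁅g, h * c⁆ = ⁅g, h⁆ := fun g h c hc => by
    rw [← commutatorElement_inv, hleft h g c hc, commutatorElement_inv]
  refine (Set.finite_range fun a : (G ⧸ Subgroup.center G) × (G ⧸ Subgroup.center G) =>
    ⁅a.1.out, a.2.out⁆).subset ?_
  rintro _ ⟨g, h, rfl⟩
  obtain ⟨c, hc⟩ := QuotientGroup.mk_out_eq_mul (Subgroup.center G) g
  obtain ⟨d, hd⟩ := QuotientGroup.mk_out_eq_mul (Subgroup.center G) h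
  refine ⟨(g, h), ?_⟩
  simp only [hc, hd]
  rw [hleft _ _ _ c.2, hright _ _ _ d.2]

theorem finite_of_finiteIndex_center_of_commutator_eq_top [(Subgroup.center G).FiniteIndex]
    (hG : commutator G = ⊤) : Finite G := by
  have := finite_commutatorSet_of_finiteIndex_center (G := G)
  have : Finite (commutator G) := inferInstance
  rw [hG] at this
  exact Finite.of_equiv _ Subgroup.topEquiv.toEquiv

theorem finite_of_le_commutator_of_commutator_eq_bot {E Γ : Subgroup G} [Γ.FiniteIndex]
    (hE : E ≤ ⁅E, E⁆) (hΓ : ⁅Γ, E⁆ = ⊥) : Finite E := by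
  have hcenter : Γ.subgroupOf E ≤ Subgroup.center E := fun a ha =>
    Subgroup.mem_center_iff.2 fun b => Subtype.ext
      (commutatorElement_eq_one_iff_mul_comm.1 ((Subgroup.mem_bot).1
        (hΓ ▸ Subgroup.commutator_mem_commutator ha b.2))).symm
  have : (Subgroup.center E).FiniteIndex := Subgroup.finiteIndex_of_le hcenter
  refine finite_of_finiteIndex_center_of_commutator_eq_top ?_
  apply Subgroup.map_injective E.subtype_injective
  rw [Subgroup.map_subtype_commutator, ← MonoidHom.range_eq_map, Subgroup.range_subtype]
  exact (Subgroup.commutator_le_self E).antisymm hE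

theorem finiteIndex_map {H : Type*} [Group H] {f : G →* H} (hf : Function.Surjective f)
    (K : Subgroup G) [hK : K.FiniteIndex] : (K.map f).FiniteIndex :=
  ⟨fun h => hK.index_ne_zero (Nat.eq_zero_of_zero_dvd (h ▸ Subgroup.index_map_dvd K hf))⟩

theorem finiteIndex_of_commutator_le {E Γ N : Subgroup G} [N.Normal] [E.FiniteIndex]
    [Γ.FiniteIndex] (hE : E ≤ ⁅E, E⁆) (hΓ : ⁅Γ, E⁆ ≤ N) : N.FiniteIndex := by
  set π := QuotientGroup.mk' N
  have hπ : Function.Surjective π := QuotientGroup.mk'_surjective N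
  have : (E.map π).FiniteIndex := finiteIndex_map hπ E
  have : (Γ.map π).FiniteIndex := finiteIndex_map hπ Γ
  have : Finite (E.map π) := by
    refine finite_of_le_commutator_of_commutator_eq_bot (Γ := Γ.map π) ?_ ?_
    · rw [← Subgroup.map_commutator]
      exact Subgroup.map_mono hE
    · rw [← Subgroup.map_commutator, Subgroup.map_eq_bot_iff, QuotientGroup.ker_mk']
      exact hΓ
  have : Finite (G ⧸ N) := by
    apply Nat.finite_of_card_ne_zero
    rw [← (E.map π).card_mul_index]
    exact mul_ne_zero Nat.card_pos.ne' Subgroup.FiniteIndex.index_ne_zero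
  exact Subgroup.finiteIndex_of_finite_quotient

end FiniteIndex

section Congruence

variable {ι R S : Type*} [Fintype ι] [DecidableEq ι] [CommRing R] [CommRing S]

theorem map_transvection (f : R →+* S) {i j : ι} (hij : i ≠ j) (x : R) :
    SpecialLinearGroup.map f (transvection hij x) = transvection hij (f x) := by
  apply coe_injective
  rw [SpecialLinearGroup.map_apply_coe, transvection_coe, transvection_coe, map_add, map_one]
  simp

theorem elementary_top_le_comap (f : R →+* S) :
    elementary ι ⊤ ≤ (elementary ι (⊤ : Ideal S)).comap (SpecialLinearGroup.map f) :=
  elementary_le_iff.2 fun i j hij x _ => by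
    rw [Subgroup.mem_comap, map_transvection]
    exact transvection_mem_elementary hij Submodule.mem_top

theorem elementary_top_le_commutator (hι : 3 ≤ Fintype.card ι) :
    elementary ι (⊤ : Ideal R) ≤ ⁅elementary ι (⊤ : Ideal R), elementary ι (⊤ : Ideal R)⁆ :=
  elementary_le_iff.2 fun i j hij x _ => by
    obtain ⟨l, hli, hlj⟩ := exists_ne_ne hι i j
    rw [← mul_one x, ← commutator_transvection hij hli.symm hlj]
    exact Subgroup.commutator_mem_commutator (transvection_mem_elementary _ Submodule.mem_top)
      (transvection_mem_elementary _ Submodule.mem_top)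

/-- The double `R ×_{R/J} R` of a ring `R` along an ideal `J`. -/
def double (J : Ideal R) : Subring (R × R) :=
  RingHom.eqLocus ((Ideal.Quotient.mk J).comp (RingHom.fst R R))
    ((Ideal.Quotient.mk J).comp (RingHom.snd R R))

/-- The first projection of the double of a ring. -/
def doubleFst (J : Ideal R) : double J →+* R := (RingHom.fst R R).comp (double J).subtype

/-- The second projection of the double of a ring. -/
def doubleSnd (J : Ideal R) : double J →+* R := (RingHom.snd R R).comp (double J).subtype

/-- The diagonal embedding into the double of a ring. -/
def doubleDiag (J : Ideal R) : R →+* double J :=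
  ((RingHom.id R).prod (RingHom.id R)).codRestrict (double J) fun _ => rfl

theorem double_ext {J : Ideal R} {x y : double J} (h₁ : doubleFst J x = doubleFst J y)
    (h₂ : doubleSnd J x = doubleSnd J y) : x = y :=
  Subtype.ext (Prod.ext h₁ h₂)

theorem exists_double_lift {J : Ideal R} {g : SpecialLinearGroup ι R}
    (hg : g ∈ (SpecialLinearGroup.map (n := ι) (Ideal.Quotient.mk J)).ker) :
    ∃ G : SpecialLinearGroup ι (double J), SpecialLinearGroup.map (doubleFst J) G = 1 ∧
      SpecialLinearGroup.map (doubleSnd J) G = g := by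
  have hentry : ∀ i j, Ideal.Quotient.mk J ((1 : Matrix ι ι R) i j) =
      Ideal.Quotient.mk J (g.1 i j) := fun i j => by
    have h := congrArg (fun m : SpecialLinearGroup ι (R ⧸ J) => m.1 i j) (MonoidHom.mem_ker.1 hg)
    change Ideal.Quotient.mk J (g.1 i j) = (1 : Matrix ι ι (R ⧸ J)) i j at h
    rw [h, one_apply, one_apply]
    split_ifs
    · exact map_one _
    · exact map_zero _
  let M : Matrix ι ι (double J) := of fun i j => ⟨((1 : Matrix ι ι R) i j, g.1 i j), hentry i j⟩
  have hfst : (doubleFst J).mapMatrix M = 1 := rfl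
  have hsnd : (doubleSnd J).mapMatrix M = g.1 := rfl
  refine ⟨⟨M, double_ext ?_ ?_⟩, coe_injective hfst, coe_injective hsnd⟩
  · rw [RingHom.map_det, hfst, det_one, map_one]
  · rw [RingHom.map_det, hsnd, g.2, map_one]

theorem doubleFst_sub_doubleSnd_mem (J : Ideal R) (x : double J) :
    doubleFst J x - doubleSnd J x ∈ J :=
  Ideal.Quotient.eq.1 x.2

/-- Modulo `N` the two projections agree on the elementary subgroup of the double, and this
subgroup is normal; conjugate a diagonal element by the lift `(1, g)` of `g`. -/
theorem commutator_ker_elementary_top_le (hι : 3 ≤ Fintype.card ι) {J : Ideal R}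
    {N : Subgroup (SpecialLinearGroup ι R)} [N.Normal] (hN : elementary ι J ≤ N) :
    ⁅(SpecialLinearGroup.map (n := ι) (Ideal.Quotient.mk J)).ker, elementary ι (⊤ : Ideal R)⁆ ≤
      N := by
  set π := QuotientGroup.mk' N
  have hproj : elementary ι (⊤ : Ideal (double J)) ≤
      (π.comp (SpecialLinearGroup.map (doubleFst J))).eqLocus
        (π.comp (SpecialLinearGroup.map (doubleSnd J))) :=
    elementary_le_iff.2 fun i j hij x _ => by
      change π (SpecialLinearGroup.map (doubleFst J) _) =
        π (SpecialLinearGroup.map (doubleSnd J) _)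
      have hdiff : π (transvection hij (doubleFst J x - doubleSnd J x)) = 1 :=
        (QuotientGroup.eq_one_iff _).2 (hN
          (transvection_mem_elementary hij (doubleFst_sub_doubleSnd_mem J x)))
      rw [map_transvection, map_transvection, ← sub_add_cancel (doubleFst J x) (doubleSnd J x),
        transvection_add, map_mul, hdiff, one_mul]
  rw [Subgroup.commutator_le]
  intro g hg e he
  obtain ⟨G, hG₁, hG₂⟩ := exists_double_lift hg
  set D := SpecialLinearGroup.map (doubleDiag J) e
  have hD₁ : SpecialLinearGroup.map (doubleFst J) D = e := rfl
  have hD₂ : SpecialLinearGroup.map (doubleSnd J) D = e := rfl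
  have hconj : π (SpecialLinearGroup.map (doubleFst J) (G * D * G⁻¹)) =
      π (SpecialLinearGroup.map (doubleSnd J) (G * D * G⁻¹)) :=
    hproj ((normal_elementary_top hι).conj_mem _ (elementary_top_le_comap _ he) G)
  simp only [map_mul, map_inv, hG₁, hG₂, hD₁, hD₂, inv_one, one_mul, mul_one] at hconj
  refine (QuotientGroup.eq_one_iff _).1 ?_
  change π (g * e * g⁻¹ * e⁻¹) = 1
  rw [map_mul, map_mul, map_mul, map_inv, map_inv, ← hconj, mul_inv_cancel]

theorem finiteIndex_elementary (hι : 3 ≤ Fintype.card ι) (J : Ideal R) [Finite (R ⧸ J * J)]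
    [(elementary ι (⊤ : Ideal R)).FiniteIndex] : (elementary ι J).FiniteIndex := by
  have : (Subgroup.normalClosure
      (elementary ι (J * J) : Set (SpecialLinearGroup ι R))).FiniteIndex :=
    finiteIndex_of_commutator_le (elementary_top_le_commutator hι)
      (commutator_ker_elementary_top_le hι Subgroup.le_normalClosure)
  exact Subgroup.finiteIndex_of_le (normalClosure_elementary_mul_self_le hι J)

end Congruence

/-! ### Column reduction -/

section StableRange

variable {R : Type*} [CommRing R]

theorem exists_isUnit_add_mul_of_finite [Finite R] {b s : R} (h : IsCoprime b s) :
    ∃ x, IsUnit (b + s * x) := by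
  obtain ⟨i, j, hij, hpow⟩ : ∃ i j : ℕ, i < j ∧ b ^ i = b ^ j := by
    obtain ⟨i, j, hne, hpow⟩ := Finite.exists_ne_map_eq_of_infinite fun n : ℕ => b ^ n
    rcases hne.lt_or_gt with hij | hij
    exacts [⟨i, j, hij, hpow⟩, ⟨j, i, hij, hpow.symm⟩]
  set c := 1 - b ^ (j - i) with hc
  have hbc : b ^ i * c = 0 := by
    rw [hc, mul_sub, mul_one, ← pow_add, Nat.add_sub_cancel' hij.le, hpow, sub_self]
  -- a maximal ideal contains exactly one of `b` and `c`
  refine ⟨c, not_not.1 fun hunit => ?_⟩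
  obtain ⟨m, hm, hmem⟩ := exists_max_ideal_of_mem_nonunits hunit
  have hbm : b ∈ m := by
    rcases hm.isPrime.mem_or_mem (hbc ▸ m.zero_mem : b ^ i * c ∈ m) with hb | hcm
    · exact hm.isPrime.mem_of_pow_mem _ hb
    · exact (m.add_mem_iff_left (m.mul_mem_left s hcm)).1 hmem
  have hcm : c ∉ m := fun hcm => hm.ne_top <| (Ideal.eq_top_iff_one m).2 <|
    (m.sub_mem_iff_left (Ideal.pow_mem_of_mem m hbm _ (Nat.sub_pos_of_lt hij))).1 hcm
  have hsm : s ∈ m :=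
    (hm.isPrime.mem_or_mem ((m.add_mem_iff_right hbm).1 hmem)).resolve_right hcm
  obtain ⟨α, β, hαβ⟩ := h
  exact hm.ne_top <| (Ideal.eq_top_iff_one m).2 <|
    hαβ ▸ m.add_mem (m.mul_mem_left α hbm) (m.mul_mem_left β hsm)

theorem isUnit_mk_span_singleton_iff {d b : R} :
    IsUnit (Ideal.Quotient.mk (Ideal.span {d}) b) ↔ IsCoprime d b := by
  rw [isUnit_iff_exists_inv, Ideal.Quotient.mk_surjective.exists]
  simp only [← map_mul, ← map_one (Ideal.Quotient.mk (Ideal.span {d})),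
    Ideal.Quotient.mk_eq_mk_iff_sub_mem, Ideal.mem_span_singleton]
  constructor
  · rintro ⟨u, c, hc⟩
    exact ⟨-c, u, by linear_combination hc⟩
  · rintro ⟨c, u, h⟩
    exact ⟨u, -c, by linear_combination h⟩

theorem exists_isCoprime_add_mul {d b s α β γ : R} [Finite (R ⧸ Ideal.span {d})]
    (h : α * d + β * b + γ * s = 1) : ∃ x, IsCoprime d (b + s * x) := by
  have hd : Ideal.Quotient.mk (Ideal.span {d}) d = 0 :=
    Ideal.Quotient.eq_zero_iff_mem.2 (Ideal.mem_span_singleton_self d)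
  have hcoprime : IsCoprime (Ideal.Quotient.mk (Ideal.span {d}) b)
      (Ideal.Quotient.mk (Ideal.span {d}) s) := by
    refine ⟨Ideal.Quotient.mk _ β, Ideal.Quotient.mk _ γ, ?_⟩
    rw [← map_one (Ideal.Quotient.mk (Ideal.span {d})), ← h]
    simp only [map_add, map_mul, hd, mul_zero, zero_add]
  obtain ⟨x, hx⟩ := exists_isUnit_add_mul_of_finite hcoprime
  obtain ⟨x, rfl⟩ := Ideal.Quotient.mk_surjective x
  exact ⟨x, isUnit_mk_span_singleton_iff.1 (by rwa [map_add, map_mul])⟩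

end StableRange

section ColumnReduction

variable {ι R : Type*} [Fintype ι] [DecidableEq ι] [CommRing R]

theorem rankOne_smul {v w : ι → R} (h : w ⬝ᵥ v = 0) (u : ι → R) :
    rankOne v w • u = u + (w ⬝ᵥ u) • v := by
  change (rankOne v w).1 *ᵥ u = _
  rw [coe_rankOne h, add_mulVec, one_mulVec, vecMulVec_mulVec]
  simp

theorem rankOne_single_one_smul {w : ι → R} {p : ι} (hw : w p = 0) (u : ι → R) :
    rankOne (Pi.single p 1) w • u = u + Pi.single p (w ⬝ᵥ u) := by
  rw [rankOne_smul (by rw [dotProduct_single, hw, zero_mul]), ← Pi.single_smul, smul_eq_mul,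
    mul_one]

theorem rankOne_single_left_mem_elementary_top {w : ι → R} {p : ι} (hw : w p = 0) :
    rankOne (Pi.single p 1) w ∈ elementary ι (⊤ : Ideal R) :=
  rankOne_single_left_mem_elementary hw fun _ => Submodule.mem_top

theorem mem_orbit_of_smul_mem_orbit {G X : Type*} [Group G] [MulAction G X] {H : Subgroup G}
    {g : G} (hg : g ∈ H) {x y : X} (h : g • x ∈ MulAction.orbit H y) :
    x ∈ MulAction.orbit H y :=
  MulAction.orbit_eq_iff.1 ((MulAction.orbit_smul (⟨g, hg⟩ : H) x).symm.trans
    (MulAction.orbit_eq_iff.2 h))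

variable {o a b : ι} {v : ι → R}

theorem mem_orbit_single_of_apply_eq_one (h : v o = 1) :
    v ∈ MulAction.orbit (elementary ι (⊤ : Ideal R)) (Pi.single o 1 : ι → R) := by
  have hzero : (Pi.single o 1 - v : ι → R) o = 0 := by simp [h]
  refine mem_orbit_of_smul_mem_orbit
    (rankOne_single_right_mem_elementary (c := 1) hzero fun _ => Submodule.mem_top) ?_
  rw [rankOne_smul (by rw [single_dotProduct, hzero, mul_zero]), single_one_dotProduct, h,
    one_smul, add_sub_cancel]
  exact MulAction.mem_orbit_self _

theorem mem_orbit_single_of_isCoprime (hoa : o ≠ a) (hob : o ≠ b) (h : IsCoprime (v a) (v b)) :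
    v ∈ MulAction.orbit (elementary ι (⊤ : Ideal R)) (Pi.single o 1 : ι → R) := by
  obtain ⟨α, β, hαβ⟩ := h
  set w : ι → R := (1 - v o) • (Pi.single a α + Pi.single b β)
  have hwo : w o = 0 := by simp [w, hoa, hob]
  have hwv : w ⬝ᵥ v = 1 - v o := by
    rw [smul_dotProduct, add_dotProduct, single_dotProduct, single_dotProduct, hαβ, smul_eq_mul,
      mul_one]
  refine mem_orbit_of_smul_mem_orbit (rankOne_single_left_mem_elementary_top hwo)
    (mem_orbit_single_of_apply_eq_one ?_)
  rw [rankOne_single_one_smul hwo, hwv, Pi.add_apply, Pi.single_eq_same, add_sub_cancel]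

variable [Ring.HasFiniteQuotients R]

theorem mem_orbit_single_of_apply_ne_zero (hoa : o ≠ a) (hob : o ≠ b) (hab : a ≠ b) {y : ι → R}
    (hy : y ⬝ᵥ v = 1) (ha : v a ≠ 0) :
    v ∈ MulAction.orbit (elementary ι (⊤ : Ideal R)) (Pi.single o 1 : ι → R) := by
  have : Finite (R ⧸ Ideal.span {v a}) :=
    Ring.HasFiniteQuotients.finiteQuotient (by simpa using ha)
  set z := y - (Pi.single a (y a) + Pi.single b (y b)) with hz
  have hzv : z ⬝ᵥ v = 1 - (y a * v a + y b * v b) := by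
    rw [hz, sub_dotProduct, hy, add_dotProduct, single_dotProduct, single_dotProduct]
  obtain ⟨x, hx⟩ := exists_isCoprime_add_mul (d := v a) (b := v b) (s := z ⬝ᵥ v)
    (α := y a) (β := y b) (γ := 1) (by rw [hzv]; ring)
  have hxzb : (x • z) b = 0 := by simp [hz, hab.symm]
  refine mem_orbit_of_smul_mem_orbit (rankOne_single_left_mem_elementary_top hxzb)
    (mem_orbit_single_of_isCoprime hoa hob ?_)
  rw [rankOne_single_one_smul hxzb, smul_dotProduct, smul_eq_mul, mul_comm x]
  simpa [hab] using hx

theorem mem_orbit_single_of_dotProduct_eq_one (hoa : o ≠ a) (hob : o ≠ b) (hab : a ≠ b)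
    {y : ι → R} (hy : y ⬝ᵥ v = 1) :
    v ∈ MulAction.orbit (elementary ι (⊤ : Ideal R)) (Pi.single o 1 : ι → R) := by
  rcases subsingleton_or_nontrivial R with hR | hR
  · exact mem_orbit_single_of_apply_eq_one (Subsingleton.elim _ _)
  by_cases hva : v a = 0
  · obtain ⟨j, hj⟩ : ∃ j, v j ≠ 0 := by
      by_contra! hv
      simp [show v = 0 from funext hv] at hy
    have haj : a ≠ j := by
      rintro rfl
      exact hj hva
    have hmem : transvection haj (1 : R) ∈ elementary ι ⊤ :=
      transvection_mem_elementary haj Submodule.mem_top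
    have hsmul : transvection haj (1 : R) • v = v + Pi.single a (v j) := by
      rw [← rankOne_single_one_left, rankOne_single_one_smul (by simp [haj]),
        single_one_dotProduct]
    refine mem_orbit_of_smul_mem_orbit hmem (mem_orbit_single_of_apply_ne_zero hoa hob hab
      (y := y ᵥ* ((transvection haj (1 : R))⁻¹).1) ?_ ?_)
    · change _ ⬝ᵥ ((transvection haj (1 : R)).1 *ᵥ v) = 1
      rw [dotProduct_mulVec, vecMul_vecMul, ← Matrix.SpecialLinearGroup.coe_mul, inv_mul_cancel,
        Matrix.SpecialLinearGroup.coe_one, vecMul_one, hy]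
    · rw [hsmul]
      simpa [hva] using hj
  · exact mem_orbit_single_of_apply_ne_zero hoa hob hab hy hva

theorem exists_elementary_mul_mul_fixes_single (hoa : o ≠ a) (hob : o ≠ b) (hab : a ≠ b)
    (g : SpecialLinearGroup ι R) :
    ∃ e₁ ∈ elementary ι (⊤ : Ideal R), ∃ e₂ ∈ elementary ι (⊤ : Ideal R),
      (e₁ * g * e₂).1 *ᵥ Pi.single o 1 = Pi.single o 1 ∧
        Pi.single o 1 ᵥ* (e₁ * g * e₂).1 = Pi.single o 1 := by
  have hunimodular : (Pi.single o (1 : R) ᵥ* (g⁻¹).1) ⬝ᵥ (g.1 *ᵥ Pi.single o 1) = 1 := by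
    rw [dotProduct_mulVec, vecMul_vecMul, ← Matrix.SpecialLinearGroup.coe_mul, inv_mul_cancel,
      Matrix.SpecialLinearGroup.coe_one, vecMul_one, single_one_dotProduct, Pi.single_eq_same]
  obtain ⟨⟨e₁, he₁⟩, hcol⟩ := MulAction.mem_orbit_symm.1
    (mem_orbit_single_of_dotProduct_eq_one hoa hob hab hunimodular)
  replace hcol : (e₁ * g).1 *ᵥ Pi.single o 1 = Pi.single o 1 := by
    rw [Matrix.SpecialLinearGroup.coe_mul, ← mulVec_mulVec]
    exact hcol
  set w : ι → R := Pi.single o 1 - Pi.single o 1 ᵥ* (e₁ * g).1 with hw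
  have hwo : w ⬝ᵥ Pi.single o 1 = 0 := by
    rw [hw, sub_dotProduct, ← dotProduct_mulVec, hcol, sub_self]
  refine ⟨e₁, he₁, rankOne (Pi.single o 1) w,
    rankOne_single_left_mem_elementary_top (by simpa using hwo), ?_, ?_⟩
  · rw [Matrix.SpecialLinearGroup.coe_mul, coe_rankOne hwo, ← mulVec_mulVec, add_mulVec,
      one_mulVec, vecMulVec_mulVec, hwo, MulOpposite.op_zero, zero_smul, add_zero, hcol]
  · rw [Matrix.SpecialLinearGroup.coe_mul, coe_rankOne hwo, mul_add, mul_one, mul_vecMulVec, hcol,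
      vecMul_add, vecMul_vecMulVec, single_one_dotProduct, Pi.single_eq_same, one_smul, hw,
      add_sub_cancel]

end ColumnReduction

section Stabilization

variable {R : Type*} [CommRing R] {n : ℕ}

/-- The block diagonal matrix with blocks `1` and `A`. -/
def oneBlock (A : Matrix (Fin n) (Fin n) R) : Matrix (Fin (n + 1)) (Fin (n + 1)) R :=
  of (Fin.cons (Pi.single 0 1) fun i => Fin.cons 0 (A i))

theorem det_oneBlock (A : Matrix (Fin n) (Fin n) R) : (oneBlock A).det = A.det := by
  rw [det_succ_row_zero, Finset.sum_eq_single 0]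
  · simp only [Fin.val_zero, pow_zero, one_mul]
    change 1 * _ = _
    rw [one_mul]
    rfl
  · intro j _ hj
    simp [oneBlock, hj]
  · simp

theorem oneBlock_one : oneBlock (1 : Matrix (Fin n) (Fin n) R) = 1 := by
  ext i j
  cases i using Fin.cases <;> cases j using Fin.cases <;>
    simp [oneBlock, one_apply, Fin.succ_ne_zero, (Fin.succ_ne_zero _).symm]

theorem oneBlock_mul (A B : Matrix (Fin n) (Fin n) R) :
    oneBlock (A * B) = oneBlock A * oneBlock B := by
  ext i j
  cases i using Fin.cases <;> cases j using Fin.cases <;>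
    simp [oneBlock, mul_apply, Fin.sum_univ_succ]

theorem eq_oneBlock {M : Matrix (Fin (n + 1)) (Fin (n + 1)) R}
    (hcol : M *ᵥ Pi.single 0 1 = Pi.single 0 1) (hrow : Pi.single 0 1 ᵥ* M = Pi.single 0 1) :
    M = oneBlock (M.submatrix Fin.succ Fin.succ) := by
  rw [mulVec_single_one] at hcol
  rw [single_one_vecMul] at hrow
  ext i j
  have hi := congrFun hcol i
  have hj := congrFun hrow j
  cases i using Fin.cases <;> cases j using Fin.cases <;> simp_all [oneBlock]

variable (R n) in
/-- The stabilization homomorphism `A ↦ diag(1, A)`. -/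
def stabilization : SpecialLinearGroup (Fin n) R →* SpecialLinearGroup (Fin (n + 1)) R where
  toFun g := ⟨oneBlock g.1, (det_oneBlock g.1).trans g.2⟩
  map_one' := coe_injective oneBlock_one
  map_mul' g h := coe_injective (oneBlock_mul g.1 h.1)

theorem stabilization_transvection {i j : Fin n} (hij : i ≠ j) (x : R) :
    stabilization R n (transvection hij x) =
      transvection ((Fin.succ_injective n).ne hij) x := by
  apply coe_injective
  rw [transvection_coe]
  change oneBlock (transvection hij x).1 = _
  rw [transvection_coe]
  ext a b
  cases a using Fin.cases <;> cases b using Fin.cases <;>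
    simp [oneBlock, one_apply, Fin.succ_ne_zero, (Fin.succ_ne_zero _).symm, single_apply]

theorem elementary_top_le_comap_stabilization :
    elementary (Fin n) ⊤ ≤ (elementary (Fin (n + 1)) (⊤ : Ideal R)).comap (stabilization R n) :=
  elementary_le_iff.2 fun i j hij x _ => by
    rw [Subgroup.mem_comap, stabilization_transvection]
    exact transvection_mem_elementary _ Submodule.mem_top

variable [Ring.HasFiniteQuotients R]

theorem exists_elementary_mul_mul_eq_stabilization (hn : 2 ≤ n)
    (g : SpecialLinearGroup (Fin (n + 1)) R) :
    ∃ e₁ ∈ elementary (Fin (n + 1)) (⊤ : Ideal R), ∃ e₂ ∈ elementary (Fin (n + 1)) (⊤ : Ideal R),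
      ∃ h, e₁ * g * e₂ = stabilization R n h := by
  obtain ⟨e₁, he₁, e₂, he₂, hcol, hrow⟩ := exists_elementary_mul_mul_fixes_single
    (o := (0 : Fin (n + 1))) (a := ⟨1, by lia⟩) (b := ⟨2, by lia⟩) (by simp [Fin.ext_iff])
    (by simp [Fin.ext_iff]) (by simp [Fin.ext_iff]) g
  have hblock := eq_oneBlock hcol hrow
  have hdet : ((e₁ * g * e₂).1.submatrix Fin.succ Fin.succ).det = 1 := by
    rw [← det_oneBlock, ← hblock, (e₁ * g * e₂).2]
  exact ⟨e₁, he₁, e₂, he₂, ⟨_, hdet⟩, coe_injective hblock⟩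

theorem mk_stabilization_surjective (hn : 2 ≤ n)
    [(elementary (Fin (n + 1)) (⊤ : Ideal R)).Normal] :
    Function.Surjective ((QuotientGroup.mk' (elementary (Fin (n + 1)) (⊤ : Ideal R))).comp
      (stabilization R n)) := fun q => by
  obtain ⟨g, rfl⟩ := QuotientGroup.mk'_surjective _ q
  obtain ⟨e₁, he₁, e₂, he₂, h, hh⟩ := exists_elementary_mul_mul_eq_stabilization hn g
  refine ⟨h, ?_⟩
  rw [← QuotientGroup.ker_mk' (elementary (Fin (n + 1)) (⊤ : Ideal R))] at he₁ he₂
  rw [MonoidHom.comp_apply, ← hh, map_mul, map_mul, he₁, he₂, one_mul, mul_one]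

theorem finiteIndex_elementary_top_succ (hn : 2 ≤ n)
    [(elementary (Fin n) (⊤ : Ideal R)).FiniteIndex] :
    (elementary (Fin (n + 1)) (⊤ : Ideal R)).FiniteIndex := by
  set E := elementary (Fin (n + 1)) (⊤ : Ideal R)
  have : E.Normal := normal_elementary_top (by rw [Fintype.card_fin]; lia)
  set ψ := (QuotientGroup.mk' E).comp (stabilization R n)
  have hker : elementary (Fin n) ⊤ ≤ ψ.ker := fun g hg =>
    (QuotientGroup.eq_one_iff _).2 (elementary_top_le_comap_stabilization hg)
  have : ψ.ker.FiniteIndex := Subgroup.finiteIndex_of_le hker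
  have : Finite (SpecialLinearGroup (Fin (n + 1)) R ⧸ E) := Finite.of_equiv _
    (QuotientGroup.quotientKerEquivOfSurjective ψ (mk_stabilization_surjective hn)).toEquiv
  exact Subgroup.finiteIndex_of_finite_quotient

theorem finiteIndex_elementary_top_of_three [(elementary (Fin 3) (⊤ : Ideal R)).FiniteIndex]
    (hn : 3 ≤ n) : (elementary (Fin n) (⊤ : Ideal R)).FiniteIndex := by
  induction n, hn using Nat.le_induction with
  | base => assumption
  | succ n hn _ => exact finiteIndex_elementary_top_succ (by lia)

end Stabilization

/-! ### Mennicke symbols -/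

section Mennicke

variable {R : Type*} [CommRing R]

instance : (elementary (Fin 3) (⊤ : Ideal R)).Normal := normal_elementary_top (by simp)

variable (R) in
/-- The homomorphism `SL₂(R) → SL₃(R) / E₃(R)` induced by stabilization. -/
def mennickeHom :
    SpecialLinearGroup (Fin 2) R →*
      SpecialLinearGroup (Fin 3) R ⧸ elementary (Fin 3) (⊤ : Ideal R) :=
  (QuotientGroup.mk' _).comp (stabilization R 2)

theorem mennickeHom_eq_one_iff {M : SpecialLinearGroup (Fin 2) R} :
    mennickeHom R M = 1 ↔ stabilization R 2 M ∈ elementary (Fin 3) (⊤ : Ideal R) :=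
  QuotientGroup.eq_one_iff _

theorem mennickeHom_transvection {i j : Fin 2} (hij : i ≠ j) (x : R) :
    mennickeHom R (transvection hij x) = 1 :=
  mennickeHom_eq_one_iff.2
    (elementary_top_le_comap_stabilization (transvection_mem_elementary _ Submodule.mem_top))

theorem stabilization_rankOne {v w : Fin 2 → R} (h : w ⬝ᵥ v = 0) :
    stabilization R 2 (rankOne v w) = rankOne (Fin.cons 0 v) (Fin.cons 0 w) := by
  have h' : (Fin.cons 0 w : Fin 3 → R) ⬝ᵥ (Fin.cons 0 v : Fin 3 → R) = 0 := by
    simpa [dotProduct, Fin.sum_univ_succ] using h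
  apply coe_injective
  rw [coe_rankOne h']
  change oneBlock (rankOne v w).1 = _
  rw [coe_rankOne h]
  ext a b
  cases a using Fin.cases <;> cases b using Fin.cases <;>
    simp [oneBlock, one_apply, Fin.succ_ne_zero, (Fin.succ_ne_zero _).symm, vecMulVec_apply]

theorem mennickeHom_rankOne {v w : Fin 2 → R} (h : w ⬝ᵥ v = 0) :
    mennickeHom R (rankOne v w) = 1 := by
  have h' : (Fin.cons 0 w : Fin 3 → R) ⬝ᵥ (Fin.cons 0 v : Fin 3 → R) = 0 := by
    simpa [dotProduct, Fin.sum_univ_succ] using h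
  rw [mennickeHom_eq_one_iff, stabilization_rankOne h, ← commutator_rankOne (l := 0) h' rfl rfl]
  have hleft := rankOne_single_right_mem_elementary (J := ⊤) (p := (0 : Fin 3)) (c := 1)
    (v := Fin.cons 0 v) rfl fun _ => Submodule.mem_top
  have hright := rankOne_single_left_mem_elementary (J := ⊤) (p := (0 : Fin 3))
    (w := Fin.cons 0 w) rfl fun _ => Submodule.mem_top
  exact Subgroup.commutator_le_right _ (elementary (Fin 3) (⊤ : Ideal R))
    (Subgroup.commutator_mem_commutator hleft hright)

theorem coe_stabilization_two (M : SpecialLinearGroup (Fin 2) R) :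
    (stabilization R 2 M).1 = !![1, 0, 0; 0, M 0 0, M 0 1; 0, M 1 0, M 1 1] := by
  ext i j
  fin_cases i <;> fin_cases j <;> rfl

theorem det_eq_one_two (M : SpecialLinearGroup (Fin 2) R) :
    M 0 0 * M 1 1 - M 0 1 * M 1 0 = 1 := by
  rw [← det_fin_two, M.det_coe]

/-- `IsMennickeSymbol a b q` says that `q` is the class in `SL₃(R) / E₃(R)` of a matrix of
`SL₂(R)` with first row `(a, b)`; it depends only on that row, by `IsMennickeSymbol.unique`. -/
def IsMennickeSymbol (a b : R)
    (q : SpecialLinearGroup (Fin 3) R ⧸ elementary (Fin 3) (⊤ : Ideal R)) : Prop :=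
  ∃ M : SpecialLinearGroup (Fin 2) R, M 0 0 = a ∧ M 0 1 = b ∧ mennickeHom R M = q

theorem isMennickeSymbol_mennickeHom (M : SpecialLinearGroup (Fin 2) R) :
    IsMennickeSymbol (M 0 0) (M 0 1) (mennickeHom R M) :=
  ⟨M, rfl, rfl, rfl⟩

namespace IsMennickeSymbol

variable {a b : R} {q q' : SpecialLinearGroup (Fin 3) R ⧸ elementary (Fin 3) (⊤ : Ideal R)}

theorem eq_one_of_left (h : IsMennickeSymbol 1 b q) : q = 1 := by
  obtain ⟨M, hM, rfl, rfl⟩ := h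
  have hdet := det_eq_one_two M
  have hfactor : M = transvection one_ne_zero (M 1 0) * transvection zero_ne_one (M 0 1) := by
    apply coe_injective
    rw [Matrix.SpecialLinearGroup.coe_mul, transvection_coe, transvection_coe]
    ext i j
    fin_cases i <;> fin_cases j <;> simp [mul_apply, single_apply, hM]
    grind
  rw [hfactor, map_mul, mennickeHom_transvection, mennickeHom_transvection, one_mul]

theorem unique (h : IsMennickeSymbol a b q) (h' : IsMennickeSymbol a b q') : q = q' := by
  obtain ⟨M, rfl, rfl, rfl⟩ := h
  obtain ⟨M', ha, hb, rfl⟩ := h'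
  rw [← mul_inv_eq_one, ← map_inv, ← map_mul]
  refine eq_one_of_left ⟨M * M'⁻¹, ?_, rfl, rfl⟩
  have hdet := det_eq_one_two M'
  rw [ha, hb] at hdet
  rw [Matrix.SpecialLinearGroup.coe_mul, Matrix.SpecialLinearGroup.coe_inv, adjugate_fin_two,
    mul_apply, Fin.sum_univ_two]
  simp only [cons_val', cons_val_zero, cons_val_one, of_apply, cons_val_fin_one]
  linear_combination hdet

theorem add_right (h : IsMennickeSymbol a b q) (x : R) : IsMennickeSymbol a (b + a * x) q := by
  obtain ⟨M, rfl, rfl, rfl⟩ := h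
  refine ⟨M * transvection zero_ne_one x, ?_, ?_, ?_⟩
  · simp [transvection_coe, mul_add, Matrix.add_apply]
  · simp [transvection_coe, mul_add, Matrix.add_apply]
  · rw [map_mul, mennickeHom_transvection, mul_one]

theorem add_left (h : IsMennickeSymbol a b q) (x : R) : IsMennickeSymbol (a + b * x) b q := by
  obtain ⟨M, rfl, rfl, rfl⟩ := h
  refine ⟨M * transvection one_ne_zero x, ?_, ?_, ?_⟩
  · simp [transvection_coe, mul_add, Matrix.add_apply]
  · simp [transvection_coe, mul_add, Matrix.add_apply]
  · rw [map_mul, mennickeHom_transvection, mul_one]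

theorem exists_sub_eq_one (h : IsMennickeSymbol a b q) : ∃ α β, a * α - b * β = 1 := by
  obtain ⟨M, rfl, rfl, rfl⟩ := h
  exact ⟨_, _, det_eq_one_two M⟩

theorem eq_one_of_right (h : IsMennickeSymbol a 0 q) : q = 1 := by
  obtain ⟨α, β, hα⟩ := h.exists_sub_eq_one
  have hα1 := (h.add_right α).add_left (1 - a)
  rw [show 0 + a * α = 1 by linear_combination hα, show a + 1 * (1 - a) = 1 by ring] at hα1
  exact hα1.eq_one_of_left

end IsMennickeSymbol

theorem mennickeHom_of_upper_triangular {M : SpecialLinearGroup (Fin 2) R} (h : M 1 0 = 0) :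
    mennickeHom R M = 1 := by
  have hdet := det_eq_one_two M
  have hM := (isMennickeSymbol_mennickeHom M).add_right (-M 1 1 * M 0 1)
  rw [show M 0 1 + M 0 0 * (-M 1 1 * M 0 1) = 0 by
    linear_combination (-M 0 1) * hdet - M 0 1 ^ 2 * h] at hM
  exact hM.eq_one_of_right

section Weyl

variable {ι : Type*} [Fintype ι] [DecidableEq ι] {i j : ι}

variable (R) in
/-- The signed permutation matrix sending `e_j` to `e_i` and `e_i` to `-e_j`. -/
def weyl (hij : i ≠ j) : SpecialLinearGroup ι R :=
  transvection hij 1 * transvection hij.symm (-1) * transvection hij 1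

theorem weyl_mem_elementary_top (hij : i ≠ j) : weyl R hij ∈ elementary ι (⊤ : Ideal R) :=
  mul_mem (mul_mem (transvection_mem_elementary _ Submodule.mem_top)
    (transvection_mem_elementary _ Submodule.mem_top))
    (transvection_mem_elementary _ Submodule.mem_top)

end Weyl

theorem coe_weyl_two_one :
    (weyl R (show (2 : Fin 3) ≠ 1 by decide)).1 = !![1, 0, 0; 0, 0, -1; 0, 1, 0] := by
  ext i j
  fin_cases i <;> fin_cases j <;>
    simp [weyl, transvection_coe, mul_add, add_mul, one_apply, Matrix.add_apply]

theorem coe_weyl_zero_two :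
    (weyl R (show (0 : Fin 3) ≠ 2 by decide)).1 = !![0, 0, 1; 0, 1, 0; -1, 0, 0] := by
  ext i j
  fin_cases i <;> fin_cases j <;>
    simp [weyl, transvection_coe, mul_add, add_mul, one_apply, Matrix.add_apply]

theorem coe_transvection_three {i j : Fin 3} (hij : i ≠ j) (x : R) :
    (transvection hij x).1 =
      !![1, single i j x 0 1, single i j x 0 2;
        single i j x 1 0, 1, single i j x 1 2;
        single i j x 2 0, single i j x 2 1, 1] := by
  have hdiag (k : Fin 3) : single i j x k k = 0 := single_apply_of_ne _ _ _ _ _ (by grind)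
  rw [transvection_coe, eta_fin_three (1 + single i j x)]
  simp [hdiag, one_apply]

/-- **The Mennicke relation.** -/
theorem IsMennickeSymbol.mul {a b₁ b₂ : R}
    {q₁ q₂ : SpecialLinearGroup (Fin 3) R ⧸ elementary (Fin 3) (⊤ : Ideal R)}
    (h₁ : IsMennickeSymbol a b₁ q₁) (h₂ : IsMennickeSymbol a b₂ q₂) :
    IsMennickeSymbol a (-(b₁ * b₂)) (q₁ * q₂) := by
  obtain ⟨M₁, ha₁, rfl, rfl⟩ := h₁
  obtain ⟨M₂, ha₂, rfl, rfl⟩ := h₂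
  have hdet₁ := det_eq_one_two M₁
  have hdet₂ := det_eq_one_two M₂
  let M₃ : SpecialLinearGroup (Fin 2) R :=
    ⟨!![a, -(M₁ 0 1 * M₂ 0 1); M₁ 1 0 * M₂ 1 0, M₂ 1 1 - M₂ 1 0 * M₁ 1 1 * M₂ 0 1], by
      rw [det_fin_two_of]
      grind⟩
  have h01 : (0 : Fin 3) ≠ 1 := by decide
  have h02 : (0 : Fin 3) ≠ 2 := by decide
  have h21 : (2 : Fin 3) ≠ 1 := by decide
  have key : weyl R h02 * transvection h02 (-M₂ 1 0) * stabilization R 2 M₁ *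
      (weyl R h21 * weyl R h02) * stabilization R 2 M₂ =
        stabilization R 2 M₃ * (transvection h02 (-(M₁ 1 1 * M₂ 0 1)) *
          transvection h01 (M₁ 1 0) * transvection h01.symm (M₁ 0 1) *
            (weyl R h02 * weyl R h21 * weyl R h02)) := by
    apply coe_injective
    simp only [Matrix.SpecialLinearGroup.coe_mul, coe_stabilization_two, coe_weyl_two_one,
      coe_weyl_zero_two, coe_transvection_three]
    ext i j
    fin_cases i <;> fin_cases j <;> simp [M₃] <;> grind
  have hmk (i j : Fin 3) (hij : i ≠ j) (x : R) :
      QuotientGroup.mk' (elementary (Fin 3) ⊤) (transvection hij x) = 1 :=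
    (QuotientGroup.eq_one_iff _).2 (transvection_mem_elementary _ Submodule.mem_top)
  have hweyl (i j : Fin 3) (hij : i ≠ j) :
      QuotientGroup.mk' (elementary (Fin 3) ⊤) (weyl R hij) = 1 :=
    (QuotientGroup.eq_one_iff _).2 (weyl_mem_elementary_top hij)
  have hmul := congrArg (QuotientGroup.mk' (elementary (Fin 3) ⊤)) key
  simp only [map_mul, hmk, hweyl, one_mul, mul_one] at hmul
  exact ⟨M₃, rfl, rfl, hmul.symm⟩

theorem IsMennickeSymbol.pow {a b : R}
    {q : SpecialLinearGroup (Fin 3) R ⧸ elementary (Fin 3) (⊤ : Ideal R)}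
    (h : IsMennickeSymbol a b q) (k : ℕ) : IsMennickeSymbol a (-(-b) ^ (k + 1)) (q ^ (k + 1)) := by
  induction k with
  | zero => simpa using h
  | succ k ih =>
    rw [pow_succ q, show -(-b) ^ (k + 1 + 1) = -(-(-b) ^ (k + 1) * b) by ring]
    exact ih.mul h

/-- If `(-b) ^ k ≡ 1` modulo `a`, then `q ^ k` is the symbol of `(a, -1)`, which is trivial. -/
theorem IsMennickeSymbol.isOfFinOrder {a b : R}
    {q : SpecialLinearGroup (Fin 3) R ⧸ elementary (Fin 3) (⊤ : Ideal R)}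
    (h : IsMennickeSymbol a b q) [Finite (R ⧸ Ideal.span {a})] : IsOfFinOrder q := by
  obtain ⟨α, β, hαβ⟩ := h.exists_sub_eq_one
  have hunit : IsUnit (Ideal.Quotient.mk (Ideal.span {a}) (-b)) :=
    isUnit_mk_span_singleton_iff.2 ⟨α, β, by linear_combination hαβ⟩
  obtain ⟨k, hk, hpow⟩ := (isOfFinOrder_of_finite hunit.unit).exists_pow_eq_one
  obtain ⟨k, rfl⟩ := Nat.exists_eq_add_one.2 hk
  replace hpow : Ideal.Quotient.mk (Ideal.span {a}) ((-b) ^ (k + 1)) =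
      Ideal.Quotient.mk (Ideal.span {a}) 1 := by
    rw [map_pow, map_one, ← hunit.unit_spec, ← Units.val_pow_eq_pow_val, hpow, Units.val_one]
  rw [Ideal.Quotient.mk_eq_mk_iff_sub_mem, Ideal.mem_span_singleton] at hpow
  obtain ⟨c, hc⟩ := hpow
  have hone := ((h.pow k).add_right c).add_left (a - 1)
  rw [show -(-b) ^ (k + 1) + a * c = -1 by linear_combination -hc,
    show a + -1 * (a - 1) = 1 by ring] at hone
  exact isOfFinOrder_iff_pow_eq_one.2 ⟨k + 1, hk, hone.eq_one_of_left⟩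

section FiniteQuotients

variable [Ring.HasFiniteQuotients R]

theorem finite_quotient_span_singleton {d : R} (hd : d ≠ 0) : Finite (R ⧸ Ideal.span {d}) :=
  Ring.HasFiniteQuotients.finiteQuotient (Ideal.span_singleton_eq_bot.not.2 hd)

theorem isOfFinOrder_mennickeHom (M : SpecialLinearGroup (Fin 2) R) :
    IsOfFinOrder (mennickeHom R M) := by
  have hM := isMennickeSymbol_mennickeHom M
  by_cases ha : M 0 0 = 0
  · by_cases hb : M 0 1 = 0
    · rw [hb] at hM
      rw [hM.eq_one_of_right]
      exact IsOfFinOrder.one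
    · have := finite_quotient_span_singleton hb
      have hM' := hM.add_left 1
      rw [ha, zero_add, mul_one] at hM'
      exact hM'.isOfFinOrder
  · have := finite_quotient_span_singleton ha
    exact hM.isOfFinOrder

/-- Row operations give any two symbols a common first entry, and then the Mennicke relation is
symmetric in the two factors. -/
theorem commute_mennickeHom (M₁ M₂ : SpecialLinearGroup (Fin 2) R) :
    Commute (mennickeHom R M₁) (mennickeHom R M₂) := by
  have h₁ := isMennickeSymbol_mennickeHom M₁
  have h₂ := isMennickeSymbol_mennickeHom M₂
  set a := M₁ 0 0
  set b := M₁ 0 1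
  set c := M₂ 0 0
  set d := M₂ 0 1
  by_cases hd : d = 0
  · rw [hd] at h₂
    rw [h₂.eq_one_of_right]
    exact Commute.one_right _
  have := finite_quotient_span_singleton hd
  obtain ⟨α, β, hαβ⟩ := h₁.exists_sub_eq_one
  obtain ⟨x, u, w, huw⟩ := exists_isCoprime_add_mul (d := d) (b := b) (s := a) (α := 0)
    (β := -β) (γ := α) (by linear_combination hαβ)
  have h₁' := (h₁.add_right x).add_left ((c - a) * w)
  have h₂' := h₂.add_left (-(c - a) * u)
  rw [show c + d * (-(c - a) * u) = a + (b + a * x) * ((c - a) * w) by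
    linear_combination (a - c) * huw] at h₂'
  have hcomm := h₂'.mul h₁'
  rw [mul_comm d] at hcomm
  exact (h₁'.mul h₂').unique hcomm

end FiniteQuotients

theorem fg_of_closure_union_ker {G H : Type*} [Group G] [Group H] {f : G →* H}
    (hf : Function.Surjective f) {F : Set G} (hF : F.Finite)
    (hFker : Subgroup.closure (F ∪ f.ker) = ⊤) : Group.FG H := by
  refine Group.fg_iff.2 ⟨f '' F, ?_, hF.image f⟩
  have hmap := congrArg (Subgroup.map f) hFker
  rw [MonoidHom.map_closure, Set.image_union, Subgroup.closure_union, ← MonoidHom.map_closure,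
    ← MonoidHom.map_closure, Subgroup.closure_eq, (Subgroup.map_eq_bot_iff _).2 le_rfl, sup_bot_eq,
    Subgroup.map_top_of_surjective f hf, MonoidHom.map_closure] at hmap
  exact hmap

theorem finiteIndex_elementary_three [Ring.HasFiniteQuotients R]
    {F : Set (SpecialLinearGroup (Fin 2) R)} (hF : F.Finite)
    (hFker : Subgroup.closure (F ∪ (mennickeHom R).ker) = ⊤) :
    (elementary (Fin 3) (⊤ : Ideal R)).FiniteIndex := by
  have : (elementary (Fin (2 + 1)) (⊤ : Ideal R)).Normal := normal_elementary_top (by simp)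
  have hsurj : Function.Surjective (mennickeHom R) := mk_stabilization_surjective le_rfl
  let _ : CommGroup (SpecialLinearGroup (Fin 3) R ⧸ elementary (Fin 3) (⊤ : Ideal R)) :=
    { mul_comm := hsurj.forall₂.2 commute_mennickeHom }
  have := fg_of_closure_union_ker hsurj hF hFker
  have : Finite (SpecialLinearGroup (Fin 3) R ⧸ elementary (Fin 3) (⊤ : Ideal R)) :=
    CommGroup.finite_of_fg_isMulTorsion _ (hsurj.forall.2 isOfFinOrder_mennickeHom)
  exact Subgroup.finiteIndex_of_finite_quotient

end Mennicke

/-! ### Generating `SL₂` by descent -/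

theorem eq_top_of_descent {G X : Type*} [Group G] [MulAction G X] {Δ : Subgroup G} {S : Set X}
    (hS : S.Nonempty) (hΔ : ∀ g : G, ∀ A ∈ S, g • A ∈ S → g ∈ Δ) (size : X → ℕ)
    (hdescent : ∀ W, (∃ g ∈ Δ, ∃ A ∈ S, g • A = W) ∨
      ∃ u ∈ Δ, ∃ γ : G, ∃ A ∈ S, ∃ Z ∈ S, γ • A = u • W ∧ size (γ • Z) < size W) :
    Δ = ⊤ := by
  have hcover (W : X) : ∃ g ∈ Δ, ∃ A ∈ S, g • A = W := by
    induction hW : size W using Nat.strong_induction_on generalizing W with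
    | _ N ih =>
      obtain h | ⟨u, hu, γ, A, hA, Z, hZ, hγ, hlt⟩ := hdescent W
      · exact h
      obtain ⟨g, hg, B, hB, hgB⟩ := ih _ (hW ▸ hlt) (γ • Z) rfl
      have hmem : g⁻¹ * γ ∈ Δ := hΔ _ Z hZ (by rwa [mul_smul, ← hgB, inv_smul_smul])
      refine ⟨u⁻¹ * γ, Δ.mul_mem (Δ.inv_mem hu) ?_, A, hA, ?_⟩
      · simpa using Δ.mul_mem hg hmem
      · rw [mul_smul, hγ, inv_smul_smul]
  obtain ⟨A, hA⟩ := hS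
  refine (Subgroup.eq_top_iff' Δ).2 fun g => ?_
  obtain ⟨h, hh, B, hB, hhB⟩ := hcover (g • A)
  have hmem : h⁻¹ * g ∈ Δ := hΔ _ A hA (by rwa [mul_smul, ← hhB, inv_smul_smul])
  simpa using Δ.mul_mem hh hmem

section FixedDeterminant

variable {n R : Type*} [Fintype n] [DecidableEq n] [CommRing R] [IsDomain R] {m : R}

theorem smul_fixedDetMatrix_left_injective (hm : m ≠ 0) (A : FixedDetMatrix n R m) :
    Function.Injective fun g : SpecialLinearGroup n R => g • A := fun g h hgh => by
  have hmul : g.1 * A.1 = h.1 * A.1 := congrArg Subtype.val hgh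
  have hadj := congrArg (· * A.1.adjugate) hmul
  simp only [mul_assoc, mul_adjugate, A.2, Matrix.mul_smul, mul_one] at hadj
  exact coe_injective (smul_right_injective _ hm hadj)

theorem finite_setOf_smul_mem (hm : m ≠ 0) {S : Set (FixedDetMatrix n R m)} (hS : S.Finite) :
    {g : SpecialLinearGroup n R | ∃ A ∈ S, g • A ∈ S}.Finite := by
  have : {g : SpecialLinearGroup n R | ∃ A ∈ S, g • A ∈ S} = ⋃ A ∈ S, (· • A) ⁻¹' S := by
    ext g
    simp
  rw [this]
  exact hS.biUnion fun A _ => hS.preimage (smul_fixedDetMatrix_left_injective hm A).injOn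

/-- If `X - Y = m D`, then `X Y⁻¹ = 1 + D adj(Y)` is integral. -/
theorem exists_smul_eq_of_dvd_sub (hm : m ≠ 0) {X Y : FixedDetMatrix n R m}
    (h : ∀ i j, m ∣ X.1 i j - Y.1 i j) : ∃ g : SpecialLinearGroup n R, g • Y = X := by
  choose D hD using h
  have hXY : X.1 = (1 + of D * Y.1.adjugate) * Y.1 := by
    rw [add_mul, one_mul, mul_assoc, adjugate_mul, Y.2, Matrix.mul_smul, mul_one]
    ext i j
    rw [Matrix.add_apply, Matrix.smul_apply, of_apply, smul_eq_mul, ← hD, add_sub_cancel]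
  have hdet : (1 + of D * Y.1.adjugate).det = 1 := by
    have hmul := congrArg det hXY
    rw [det_mul, X.2, Y.2] at hmul
    exact (mul_eq_right₀ hm).1 hmul.symm
  exact ⟨⟨_, hdet⟩, FixedDetMatrices.ext' _ _ hXY.symm⟩

variable [Ring.HasFiniteQuotients R]

theorem exists_finite_orbit_representatives (hm : m ≠ 0) (P : Set (FixedDetMatrix n R m)) :
    ∃ C ⊆ P, C.Finite ∧ ∀ W ∈ P, ∃ X ∈ C, ∃ g : SpecialLinearGroup n R, g • X = W := by
  have := finite_quotient_span_singleton hm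
  let f : FixedDetMatrix n R m → Matrix n n (R ⧸ Ideal.span {m}) :=
    fun W => W.1.map (Ideal.Quotient.mk _)
  obtain ⟨C, hCP, hC⟩ := Set.exists_subset_bijOn P f
  refine ⟨C, hCP, hC.finite_iff_finite.2 (Set.toFinite _), fun W hW => ?_⟩
  obtain ⟨X, hX, hXW⟩ := hC.surjOn ⟨W, hW, rfl⟩
  refine ⟨X, hX, exists_smul_eq_of_dvd_sub hm fun i j => ?_⟩
  rw [← Ideal.mem_span_singleton, ← Ideal.Quotient.eq]
  exact (congrFun (congrFun hXW i) j).symm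

end FixedDeterminant

section Descent

variable {R : Type*} [CommRing R] {m : R}

theorem smul_eq_mul_upper (W : FixedDetMatrix (Fin 2) R m) (l : R) :
    (rankOne ![W.1 0 0, W.1 1 0] ![-(l * W.1 1 0), l * W.1 0 0] • W).1 =
      W.1 * !![1, m * l; 0, 1] := by
  have hdet := W.2
  rw [det_fin_two] at hdet
  rw [FixedDetMatrices.smul_coe, coe_rankOne (by simp [mul_right_comm])]
  ext i j
  fin_cases i <;> fin_cases j <;>
    simp [mul_apply, Fin.sum_univ_two, ← hdet] <;> ring

/-- The first column of `Z` is proportional to `p`, and as large as `p` up to a factor `ν m`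
when sizes are measured by `ν`. -/
def IsNearColumn (ν : R →* ℕ) (p : Fin 2 → R) (Z : FixedDetMatrix (Fin 2) R m) : Prop :=
  ∃ x y : R, y ≠ 0 ∧ ν x ≤ ν y * ν m ∧ ∀ i, x * p i = y * Z.1 i 0

theorem IsNearColumn.map_smul_lt {ν : R →* ℕ} (hν : ∀ x, x ≠ 0 → 0 < ν x)
    {X Z : FixedDetMatrix (Fin 2) R m} {t q : R}
    (hZ : IsNearColumn ν (fun i => t * X.1 i 1 - q * X.1 i 0) Z)
    (γ : SpecialLinearGroup (Fin 2) R) {N : ℕ}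
    (hlt : ν m * ν (t * (γ • X).1 1 1 - q * (γ • X).1 1 0) < N) : ν ((γ • Z).1 1 0) < N := by
  obtain ⟨x, y, hy, hxy, hcol⟩ := hZ
  simp only [FixedDetMatrices.smul_coe, mul_apply, Fin.sum_univ_two] at hlt ⊢
  set b := γ.1 1 0 * Z.1 0 0 + γ.1 1 1 * Z.1 1 0
  set r := t * (γ.1 1 0 * X.1 0 1 + γ.1 1 1 * X.1 1 1) -
    q * (γ.1 1 0 * X.1 0 0 + γ.1 1 1 * X.1 1 0)
  have hrel : x * r = y * b := by linear_combination γ.1 1 0 * hcol 0 + γ.1 1 1 * hcol 1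
  refine lt_of_mul_lt_mul_left (a := ν y) ?_ (Nat.zero_le _)
  calc ν y * ν b = ν x * ν r := by rw [← map_mul, ← map_mul, hrel]
    _ ≤ ν y * ν m * ν r := by gcongr
    _ = ν y * (ν m * ν r) := mul_assoc _ _ _
    _ < ν y * N := Nat.mul_lt_mul_of_pos_left hlt (hν y hy)

variable [IsDomain R]

theorem lower_left_eq_zero_of_smul_eq (hm : m ≠ 0) {X W : FixedDetMatrix (Fin 2) R m}
    {g : SpecialLinearGroup (Fin 2) R} (hX : X.1 1 0 = 0) (hW : W.1 1 0 = 0) (hg : g • X = W) :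
    g 1 0 = 0 := by
  have hX00 : X.1 0 0 ≠ 0 := fun h => hm <| by rw [← X.2, det_fin_two, h, hX]; ring
  rw [← hg, FixedDetMatrices.smul_coe, mul_apply, Fin.sum_univ_two, hX, mul_zero, add_zero] at hW
  exact (mul_eq_zero.1 hW).resolve_right hX00

variable [Ring.HasFiniteQuotients R]

theorem exists_finite_near_columns {ν : R →* ℕ} (hm : m ≠ 0)
    (hcol : ∀ p : Fin 2 → R, p ≠ 0 → ∃ Z : FixedDetMatrix (Fin 2) R m, IsNearColumn ν p Z)
    {C : Set (FixedDetMatrix (Fin 2) R m)} (hC : C.Finite) {T : Set R} (hT : T.Finite)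
    (hT0 : ∀ t ∈ T, t ≠ 0) :
    ∃ S : Set (FixedDetMatrix (Fin 2) R m), S.Finite ∧ ∀ t ∈ T, ∀ q, ∃ l, ∀ X ∈ C, ∃ Z ∈ S,
      IsNearColumn ν (fun i => t * X.1 i 1 - (q + t * (m * l)) * X.1 i 0) Z := by
  have hne (X : FixedDetMatrix (Fin 2) R m) (t : R) (ht : t ≠ 0) (q : R) :
      (fun i => t * X.1 i 1 - q * X.1 i 0) ≠ 0 := fun h => by
    have h0 : t * X.1 0 1 - q * X.1 0 0 = 0 := congrFun h 0
    have h1 : t * X.1 1 1 - q * X.1 1 0 = 0 := congrFun h 1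
    have hdet := X.2
    rw [det_fin_two] at hdet
    refine mul_ne_zero ht hm ?_
    linear_combination X.1 0 0 * h1 - X.1 1 0 * h0 - t * hdet
  have : Nonempty (FixedDetMatrix (Fin 2) R m) := ⟨⟨!![1, 0; 0, m], by simp [det_fin_two]⟩⟩
  choose! Z hZ using fun X t ht q => hcol _ (hne X t ht q)
  refine ⟨⋃ t ∈ T, ⋃ X ∈ C, Set.range fun c : R ⧸ Ideal.span {t * m} => Z X t c.out,
    hT.biUnion fun t ht => hC.biUnion fun X _ => ?_, fun t ht q => ?_⟩
  · have := finite_quotient_span_singleton (mul_ne_zero (hT0 t ht) hm)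
    exact Set.finite_range _
  have hout : (Ideal.Quotient.mk (Ideal.span {t * m}) q).out - q ∈ Ideal.span {t * m} := by
    rw [← Ideal.Quotient.eq]
    exact Quotient.out_eq _
  obtain ⟨l, hl⟩ := Ideal.mem_span_singleton.1 hout
  refine ⟨l, fun X hX => ⟨_, Set.mem_biUnion ht (Set.mem_biUnion hX ⟨Ideal.Quotient.mk _ q, rfl⟩),
    ?_⟩⟩
  rw [show q + t * (m * l) = (Ideal.Quotient.mk (Ideal.span {t * m}) q).out by
    linear_combination -hl]
  exact hZ X t (hT0 t ht) _

/-- `happ` is division with remainder in which the dividend may first be multiplied by an element of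
the finite set `T`. It replaces the second column of a matrix by a smaller first column, which
`hcol` completes to a matrix of the same determinant. -/
theorem exists_finite_closure_union_ker_eq_top {ν : R →* ℕ} (hν : ∀ x, x ≠ 0 → 0 < ν x)
    (hm : m ≠ 0)
    (hcol : ∀ p : Fin 2 → R, p ≠ 0 → ∃ Z : FixedDetMatrix (Fin 2) R m, IsNearColumn ν p Z)
    {T : Set R} (hT : T.Finite) (hT0 : ∀ t ∈ T, t ≠ 0)
    (happ : ∀ a b : R, b ≠ 0 → ∃ q, ∃ t ∈ T, ν m * ν (t * a - q * b) < ν b) :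
    ∃ F : Set (SpecialLinearGroup (Fin 2) R), F.Finite ∧
      Subgroup.closure (F ∪ (mennickeHom R).ker) = ⊤ := by
  obtain ⟨C, -, hC, hCrep⟩ :=
    exists_finite_orbit_representatives hm (Set.univ : Set (FixedDetMatrix (Fin 2) R m))
  obtain ⟨U, hUP, hU, hUrep⟩ :=
    exists_finite_orbit_representatives hm {W : FixedDetMatrix (Fin 2) R m | W.1 1 0 = 0}
  obtain ⟨N, hN, hNcol⟩ := exists_finite_near_columns hm hcol hC hT hT0
  set S := C ∪ U ∪ N
  have hS : S.Finite := (hC.union hU).union hN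
  refine ⟨_, finite_setOf_smul_mem hm hS, ?_⟩
  set Δ := Subgroup.closure
    ({g : SpecialLinearGroup (Fin 2) R | ∃ A ∈ S, g • A ∈ S} ∪ (mennickeHom R).ker)
  have hker {g : SpecialLinearGroup (Fin 2) R} (hg : mennickeHom R g = 1) : g ∈ Δ :=
    Subgroup.subset_closure (Or.inr hg)
  have hnonempty : S.Nonempty := by
    obtain ⟨X, hX, -⟩ := hCrep ⟨!![1, 0; 0, m], by simp [det_fin_two]⟩ trivial
    exact ⟨X, Or.inl (Or.inl hX)⟩
  refine eq_top_of_descent hnonempty (fun g A hA hgA => Subgroup.subset_closure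
    (Or.inl ⟨A, hA, hgA⟩)) (fun W => ν (W.1 1 0)) fun W => ?_
  by_cases hW : W.1 1 0 = 0
  · obtain ⟨X, hX, g, hg⟩ := hUrep W hW
    exact Or.inl ⟨g, hker (mennickeHom_of_upper_triangular
      (lower_left_eq_zero_of_smul_eq hm (hUP hX) hW hg)), X, Or.inl (Or.inr hX), hg⟩
  obtain ⟨q, t, ht, hlt⟩ := happ (W.1 1 1) (W.1 1 0) hW
  obtain ⟨l, hl⟩ := hNcol t ht q
  set u := rankOne ![W.1 0 0, W.1 1 0] ![-(l * W.1 1 0), l * W.1 0 0]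
  have huW : (u • W).1 = W.1 * !![1, m * l; 0, 1] := smul_eq_mul_upper W l
  obtain ⟨X, hX, γ, hγ⟩ := hCrep (u • W) trivial
  obtain ⟨Z, hZ, hZX⟩ := hl X hX
  refine Or.inr ⟨u, hker (mennickeHom_rankOne (by simp [mul_right_comm])), γ,
    X, Or.inl (Or.inl hX), Z, Or.inr hZ, hγ, hZX.map_smul_lt hν γ ?_⟩
  have hrem : t * (u • W).1 1 1 - (q + t * (m * l)) * (u • W).1 1 0 =
      t * W.1 1 1 - q * W.1 1 0 := by
    simp only [huW, mul_apply, Fin.sum_univ_two, of_apply, cons_val', cons_val_zero, cons_val_one,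
      cons_val_fin_one]
    ring
  rwa [hγ, hrem]

end Descent

/-! ### Arithmetic input -/

section NearColumn

variable {S : Type*} [CommRing S] [IsDedekindDomain S]

open scoped nonZeroDivisors

theorem exists_ne_zero_forall_mk0_eq_and_mem [Finite (ClassGroup S)] :
    ∃ m : S, m ≠ 0 ∧ ∀ c : ClassGroup S, ∃ J : (Ideal S)⁰, ClassGroup.mk0 J = c ∧ m ∈ J.1 := by
  have := Fintype.ofFinite (ClassGroup S)
  choose J hJ using ClassGroup.mk0_surjective (R := S)
  choose d hdJ hd0 using fun c => (J c).1.ne_bot_iff.1 (nonZeroDivisors.coe_ne_zero (J c))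
  exact ⟨∏ c, d c, Finset.prod_ne_zero_iff.2 fun c _ => hd0 c, fun c => ⟨J c, hJ c,
    Ideal.mem_of_dvd _ (Finset.dvd_prod_of_mem d (Finset.mem_univ c)) (hdJ c)⟩⟩

theorem exists_isNearColumn_of_span_mul_eq {ν : S →* ℕ} (hν : ∀ x, x ≠ 0 → 0 < ν x) {m : S}
    (hm : m ≠ 0) {p : Fin 2 → S} {J : Ideal S} (hmJ : m ∈ J) {x y : S} (hy : y ≠ 0)
    (hxy : Ideal.span {x} * Ideal.span {p 0, p 1} = Ideal.span {y} * J) :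
    ∃ Z : FixedDetMatrix (Fin 2) S m, IsNearColumn ν p Z := by
  have hdvd (i : Fin 2) : ∃ z, x * p i = y * z := by
    have hmem : x * p i ∈ Ideal.span {y} * J := by
      rw [← hxy]
      refine Ideal.mul_mem_mul (Ideal.mem_span_singleton_self _) (Ideal.subset_span ?_)
      fin_cases i <;> simp
    obtain ⟨z, -, hz⟩ := Ideal.mem_span_singleton_mul.1 hmem
    exact ⟨z, hz.symm⟩
  choose z hz using hdvd
  have hmem : y * m ∈ Ideal.span {x} * Ideal.span {p 0, p 1} := by
    rw [hxy]
    exact Ideal.mul_mem_mul (Ideal.mem_span_singleton_self _) hmJ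
  obtain ⟨s, hs, hsx⟩ := Ideal.mem_span_singleton_mul.1 hmem
  obtain ⟨α, β, hαβ⟩ := Ideal.mem_span_pair.1 hs
  have hs0 : s ≠ 0 := by
    rintro rfl
    exact mul_ne_zero hy hm (by rw [← hsx, mul_zero])
  refine ⟨⟨!![z 0, -β; z 1, α], mul_left_cancel₀ hy ?_⟩, x, y, hy, ?_, fun i => ?_⟩
  · rw [det_fin_two_of]
    linear_combination hsx - α * hz 0 - β * hz 1 + x * hαβ
  · rw [← map_mul, ← hsx, map_mul]
    exact Nat.le_mul_of_pos_right _ (hν s hs0)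
  · rw [hz]
    fin_cases i <;> rfl

theorem exists_forall_isNearColumn [Finite (ClassGroup S)] {ν : S →* ℕ}
    (hν : ∀ x, x ≠ 0 → 0 < ν x) :
    ∃ m : S, m ≠ 0 ∧ ∀ p : Fin 2 → S, p ≠ 0 →
      ∃ Z : FixedDetMatrix (Fin 2) S m, IsNearColumn ν p Z := by
  obtain ⟨m, hm, hmem⟩ := exists_ne_zero_forall_mk0_eq_and_mem (S := S)
  refine ⟨m, hm, fun p hp => ?_⟩
  have hI : Ideal.span {p 0, p 1} ≠ ⊥ := fun h => hp <| by
    rw [Ideal.span_eq_bot] at h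
    ext i
    fin_cases i
    · exact h _ (by simp)
    · exact h _ (by simp)
  obtain ⟨J, hJ, hmJ⟩ := hmem (ClassGroup.mk0 ⟨_, mem_nonZeroDivisors_iff_ne_zero.2 hI⟩)
  obtain ⟨x, y, -, hy, hxy⟩ := ClassGroup.mk0_eq_mk0_iff.1 hJ.symm
  exact exists_isNearColumn_of_span_mul_eq hν hm hmJ hy hxy

end NearColumn

section Admissible

variable {R : Type*} [EuclideanDomain R] {abv : AbsoluteValue R ℤ}

theorem hasFiniteQuotients_of_isAdmissible (adm : abv.IsAdmissible) :
    Ring.HasFiniteQuotients R where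
  finiteQuotient {I} hI := by
    obtain ⟨b, hbI, hb⟩ := I.ne_bot_iff.1 hI
    by_contra hinf
    rw [not_finite_iff_infinite] at hinf
    let f := Infinite.natEmbedding (R ⧸ I)
    have habv : (0 : ℝ) < abv b := by exact_mod_cast abv.pos hb
    obtain ⟨i, j, hij, hlt⟩ := adm.exists_approx (ι := Unit) (inv_pos.2 habv) hb
      fun k _ => (f k).out
    have hmod : (f j).out % b - (f i).out % b = 0 := by
      have h := hlt ()
      rw [zsmul_eq_mul, mul_inv_cancel₀ habv.ne'] at h
      exact abv.nonpos_iff.1 (Int.lt_add_one_iff.1 (by exact_mod_cast h))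
    refine hij (Fin.ext (f.injective ?_))
    rw [← Ideal.Quotient.mk_out (f i), ← Ideal.Quotient.mk_out (f j), eq_comm, Ideal.Quotient.eq,
      ← EuclideanDomain.div_add_mod (f j).out b, ← EuclideanDomain.div_add_mod (f i).out b,
      add_sub_add_comm, hmod, add_zero, ← mul_sub]
    exact I.mul_mem_right _ hbI

variable {S : Type*} [CommRing S] [Algebra R S]

variable (abv S) in
/-- The absolute value of the norm, as a measure of the size of the elements of `S`. -/
noncomputable def normSize : S →* ℕ :=
  (Int.natAbsHom.comp abv.toMonoidWithZeroHom).toMonoidHom.comp (Algebra.norm R)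

theorem coe_normSize (x : S) : (normSize abv S x : ℤ) = abv (Algebra.norm R x) :=
  Int.natAbs_of_nonneg (abv.nonneg _)

variable {ι : Type*} (bS : Module.Basis ι R S)
include bS

theorem hasFiniteQuotients_of_basis [Finite ι] [IsDomain S] (adm : abv.IsAdmissible) :
    Ring.HasFiniteQuotients S := by
  have := hasFiniteQuotients_of_isAdmissible adm
  have := Module.Finite.of_basis bS
  exact .of_module_finite R S

theorem normSize_pos [Finite ι] [IsDomain S] {x : S} (hx : x ≠ 0) : 0 < normSize abv S x := by
  have := Fintype.ofFinite ι
  zify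
  rw [coe_normSize]
  exact abv.pos ((Algebra.norm_ne_zero_iff_of_basis bS).2 hx)

theorem exists_repr_smul_sub_smul_lt [Fintype ι] (adm : abv.IsAdmissible) {ε : ℝ} (hε : 0 < ε)
    (μ : Fin (adm.card ε ^ Fintype.card ι).succ → R) (a : S) {b : R} (hb : b ≠ 0) :
    ∃ j k, j ≠ k ∧ ∃ q : S,
      ∀ i, (abv (bS.repr ((μ k - μ j) • a - b • q) i) : ℝ) < abv b • ε := by
  obtain ⟨j, k, hjk, hlt⟩ := adm.exists_approx hε hb fun j i => μ j * bS.repr a i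
  refine ⟨j, k, hjk, ∑ i, (μ k * bS.repr a i / b - μ j * bS.repr a i / b) • bS i, fun i => ?_⟩
  convert hlt i using 3
  rw [map_sub, map_smul, map_smul, Finsupp.sub_apply, Finsupp.smul_apply, Finsupp.smul_apply,
    bS.repr_sum_self, smul_eq_mul, smul_eq_mul]
  linear_combination EuclideanDomain.div_add_mod (μ j * bS.repr a i) b -
    EuclideanDomain.div_add_mod (μ k * bS.repr a i) b

theorem mul_normSize_lt [Fintype ι] [DecidableEq ι] [IsDomain S] {c : ℕ} (hc : 0 < c) {b : R}
    {z : S}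
    (hz : ∀ i, (abv (bS.repr z i) : ℝ) < abv b • (c * ClassGroup.normBound abv bS : ℝ)⁻¹) :
    c * normSize abv S z < normSize abv S (algebraMap R S b) := by
  set B : ℝ := Int.cast (ClassGroup.normBound abv bS)
  have hB : 1 ≤ B := Int.cast_one_le_of_pos (ClassGroup.normBound_pos abv bS)
  have hc1 : (1 : ℝ) ≤ c := by exact_mod_cast hc
  have := bS.index_nonempty
  have hpow : c * (B * (c * B)⁻¹ ^ Fintype.card ι) ≤ 1 := by
    calc c * (B * (c * B)⁻¹ ^ Fintype.card ι) ≤ c * (B * (c * B)⁻¹) := by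
          gcongr
          exact pow_le_of_le_one (by positivity)
            (inv_le_one_of_one_le₀ (one_le_mul_of_one_le_of_one_le hc1 hB)) Fintype.card_ne_zero
      _ = 1 := by rw [← mul_assoc]; exact mul_inv_cancel₀ (by positivity)
  have : (0 : ℝ) ≤ abv b := by exact_mod_cast abv.nonneg b
  have hlt : (c : ℝ) * abv (Algebra.norm R z) < abv (Algebra.norm R (algebraMap R S b)) := by
    calc (c : ℝ) * abv (Algebra.norm R z)
        < c * (B * (abv b • (c * B)⁻¹) ^ Fintype.card ι) := by
          gcongr
          exact ClassGroup.norm_lt abv bS z hz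
      _ = abv b ^ Fintype.card ι * (c * (B * (c * B)⁻¹ ^ Fintype.card ι)) := by
          rw [zsmul_eq_mul, mul_pow]
          ring
      _ ≤ abv b ^ Fintype.card ι := mul_le_of_le_one_right (by positivity) hpow
      _ = abv (Algebra.norm R (algebraMap R S b)) := by
          rw [Algebra.norm_algebraMap_of_basis bS, map_pow, Int.cast_pow]
  zify
  rw [coe_normSize, coe_normSize]
  exact_mod_cast hlt

theorem exists_finite_forall_mul_normSize_lt [Finite ι] [Infinite R] [IsDomain S]
    (adm : abv.IsAdmissible) {c : ℕ} (hc : 0 < c) :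
    ∃ T : Set S, T.Finite ∧ (∀ t ∈ T, t ≠ 0) ∧ ∀ a b : S, b ≠ 0 →
      ∃ q, ∃ t ∈ T, c * normSize abv S (t * a - q * b) < normSize abv S b := by
  classical
  have := Fintype.ofFinite ι
  have := Module.Finite.of_basis bS
  set ε : ℝ := (c * ClassGroup.normBound abv bS : ℝ)⁻¹
  have hε : 0 < ε := by
    have : (0 : ℝ) < ClassGroup.normBound abv bS := by
      exact_mod_cast ClassGroup.normBound_pos abv bS
    positivity
  let μ (j : Fin (adm.card ε ^ Fintype.card ι).succ) : R := Infinite.natEmbedding R j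
  refine ⟨Set.range (fun p : _ × _ => algebraMap R S (μ p.1 - μ p.2)) \ {0},
    (Set.finite_range _).sdiff, fun t ht => ht.2, fun a b hb => ?_⟩
  obtain ⟨a', b', hb', hab⟩ := Algebra.IsAlgebraic.exists_smul_eq_mul R a hb
  obtain ⟨j, k, hjk, q, hq⟩ := exists_repr_smul_sub_smul_lt bS adm hε μ a' hb'
  refine ⟨q, algebraMap R S (μ k - μ j), ⟨⟨(k, j), rfl⟩, ?_⟩, ?_⟩
  · rw [Set.mem_singleton_iff, map_eq_zero_iff _ bS.algebraMap_injective, sub_eq_zero]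
    exact fun h => hjk (Fin.ext ((Infinite.natEmbedding R).injective h)).symm
  have hscale : algebraMap R S b' * (algebraMap R S (μ k - μ j) * a - q * b) =
      ((μ k - μ j) • a' - b' • q) * b := by
    simp only [Algebra.smul_def] at hab ⊢
    linear_combination algebraMap R S (μ k - μ j) * hab
  refine lt_of_mul_lt_mul_left (a := normSize abv S (algebraMap R S b')) ?_ (Nat.zero_le _)
  rw [mul_left_comm, ← map_mul, hscale, map_mul, ← mul_assoc]
  exact Nat.mul_lt_mul_of_pos_right (mul_normSize_lt bS hc hq) (normSize_pos bS hb)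

theorem finiteIndex_elementary_top [Finite ι] [Infinite R] [IsDedekindDomain S]
    (adm : abv.IsAdmissible) {n : ℕ} (hn : 3 ≤ n) :
    (elementary (Fin n) (⊤ : Ideal S)).FiniteIndex := by
  classical
  have := Fintype.ofFinite ι
  have := hasFiniteQuotients_of_basis bS adm
  have := Module.Finite.of_basis bS
  have := ClassGroup.fintypeOfAdmissibleOfAlgebraic bS adm
  have hν (x : S) (hx : x ≠ 0) : 0 < normSize abv S x := normSize_pos bS hx
  obtain ⟨m, hm, hcol⟩ := exists_forall_isNearColumn hν
  obtain ⟨T, hT, hT0, happ⟩ := exists_finite_forall_mul_normSize_lt bS adm (hν m hm)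
  obtain ⟨F, hF, hFker⟩ := exists_finite_closure_union_ker_eq_top hν hm hcol hT hT0 happ
  have := finiteIndex_elementary_three hF hFker
  exact finiteIndex_elementary_top_of_three hn

end Admissible

section Unipotent

variable {ι R : Type*} [Fintype ι] [DecidableEq ι] [CommRing R]

theorem elementary_le_closure_unipotent [LinearOrder ι] (J : Ideal R) :
    elementary ι J ≤ Subgroup.closure
      ({g : SpecialLinearGroup ι R | (∀ i, g.1 i i = 1) ∧ (∀ i j, j < i → g.1 i j = 0) ∧
          ∀ i j, i ≠ j → g.1 i j ∈ J} ∪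
       {g : SpecialLinearGroup ι R | (∀ i, g.1 i i = 1) ∧ (∀ i j, i < j → g.1 i j = 0) ∧
          ∀ i j, i ≠ j → g.1 i j ∈ J}) := by
  refine elementary_le_iff.2 fun i j hij x hx => Subgroup.subset_closure ?_
  have hdiag (a : ι) : (transvection hij x).1 a a = 1 := by
    rw [transvection_coe, Matrix.add_apply, one_apply_eq,
      single_apply_of_ne _ _ _ _ _ fun h => hij (h.1.trans h.2.symm), add_zero]
  have hoff {a b : ι} (hab : a ≠ b) :
      (transvection hij x).1 a b = if i = a ∧ j = b then x else 0 := by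
    rw [transvection_coe, Matrix.add_apply, one_apply_ne hab, zero_add,
      single_apply]
  have hmem (a b : ι) (hab : a ≠ b) : (transvection hij x).1 a b ∈ J := by
    rw [hoff hab]
    split_ifs
    exacts [hx, J.zero_mem]
  obtain h | h := lt_or_gt_of_ne hij
  · refine Or.inl ⟨hdiag, fun a b hab => ?_, hmem⟩
    rw [hoff hab.ne', if_neg]
    rintro ⟨rfl, rfl⟩
    exact h.asymm hab
  · refine Or.inr ⟨hdiag, fun a b hab => ?_, hmem⟩
    rw [hoff hab.ne, if_neg]
    rintro ⟨rfl, rfl⟩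
    exact h.asymm hab

end Unipotent

end UnipotentGenerators

theorem unipotent_generators_sl_n_ring_of_integers_general {R S ι : Type*} [EuclideanDomain R]
    [Infinite R] [CommRing S] [IsDedekindDomain S] [Algebra R S] [Finite ι]
    (bS : Module.Basis ι R S) {abv : AbsoluteValue R ℤ} (adm : abv.IsAdmissible) {n : ℕ}
    (hn : 3 ≤ n) {J : Ideal S} (hJ : J ≠ ⊥) :
    (Subgroup.closure
      ({g : Matrix.SpecialLinearGroup (Fin n) S |
          (∀ i, g.1 i i = 1) ∧ (∀ i j, j < i → g.1 i j = 0) ∧ ∀ i j, i ≠ j → g.1 i j ∈ J} ∪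
       {g : Matrix.SpecialLinearGroup (Fin n) S |
          (∀ i, g.1 i i = 1) ∧ (∀ i j, i < j → g.1 i j = 0) ∧
          ∀ i j, i ≠ j → g.1 i j ∈ J})).FiniteIndex := by
  have := UnipotentGenerators.hasFiniteQuotients_of_basis bS adm
  have : Finite (S ⧸ J * J) := Ring.HasFiniteQuotients.finiteQuotient (mul_ne_zero hJ hJ)
  have := UnipotentGenerators.finiteIndex_elementary_top bS adm hn
  have := UnipotentGenerators.finiteIndex_elementary (ι := Fin n) (by simpa using hn) J
  exact Subgroup.finiteIndex_of_le (UnipotentGenerators.elementary_le_closure_unipotent J)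

/-- For a number field `K` with ring of integers `O_K`, `n ≥ 3` and `k ≥ 1`,
the subgroup of `SL_n(O_K)` generated by the upper triangular unipotent matrices and the
lower triangular unipotent matrices all of whose off-diagonal entries lie in `k·O_K` has
finite index in `SL_n(O_K)`. -/
theorem unipotent_generators_sl_n_ring_of_integers
    (K : Type*) [Field K] [NumberField K] (n k : ℕ) (hn : 3 ≤ n) (hk : 1 ≤ k) :
    (Subgroup.closure
      ({g : Matrix.SpecialLinearGroup (Fin n) (𝓞 K) |
          (∀ i, g.1 i i = 1) ∧ (∀ i j : Fin n, j < i → g.1 i j = 0) ∧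
          (∀ i j : Fin n, i ≠ j → (k : 𝓞 K) ∣ g.1 i j)} ∪
       {g : Matrix.SpecialLinearGroup (Fin n) (𝓞 K) |
          (∀ i, g.1 i i = 1) ∧ (∀ i j : Fin n, i < j → g.1 i j = 0) ∧
          (∀ i j : Fin n, i ≠ j → (k : 𝓞 K) ∣ g.1 i j)})).FiniteIndex := by
  simpa only [Ideal.mem_span_singleton] using
    unipotent_generators_sl_n_ring_of_integers_general (RingOfIntegers.basis K)
      AbsoluteValue.absIsAdmissible hn (J := Ideal.span {(k : 𝓞 K)})
      (by simpa [Nat.one_le_iff_ne_zero] using hk)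
end
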